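/- arXiv:1305.5440 — 2 statements merged into one kernel-verified Lean document; each statement's English description precedes it below -/
import Mathlib

section
/- For every γ > 0 and every finite set J, there exist ε > 0 and η > 0 such that the following holds. Let V = (J, (V_j)_{j∈J}, r, H) be a hypergraph system and let ν, g, g̃ be weighted hypergraphs on V. Suppose ν satisfies the H-linear forms condition within η, 0 ≤ g_e ≤ ν_e pointwise for all e ∈ H, 0 ≤ g̃_e ≤ 1 pointwise for all e ∈ H, and (g, g̃) is an ε-discrepancy pair. Then |E[∏_{e∈H} g_e(x_e) | x ∈ V_J] − E[∏_{e∈H} g̃_e(x_e) | x ∈ V_J]| ≤ γ. -/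
/-!
The proof is by densification. Weights on `V_e` are encoded as functions on `V_J` depending only on
the coordinates in `e` (`Dep`), and the expectation is compared edge by edge, by induction on the
number of edges on which `g` and `g'` differ (`counting_aux`).

Fix such an edge `e₁` and let `a`, `b`, `n` be the conditional expectations, given the coordinates
in `e₁`, of the products over `e ≠ e₁` of the weights `g`, `g'`, `ν` (`marg`). The difference of
the two counts is `E[g_{e₁} (a - b)] + E[(g_{e₁} - g'_{e₁}) b]`. The second term is small because
of the discrepancy hypothesis: for fixed coordinates outside `e₁`, every other edge misses a
coordinate of `e₁` (`Disc.orthogonal`).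

For the first term, Cauchy–Schwarz and `g_{e₁} ≤ ν_{e₁}` reduce the problem to
`E[ν_{e₁} (a - b)²] = E[(ν_{e₁} - 1) (a - b)²] + E[(a - b)²]` (`sparse_bound`). The first summand
is small by the linear forms condition, after one Cauchy–Schwarz step for each coordinate of `e₁`,
which replaces all weights by their majorants (`LF.strong`). In the second summand, one factor `a`
may be replaced by `min a 1`, because `a ≤ n` and `n` is close to `1` in mean square
(`LF.marg_sub_one_sq`). What remains, `E[(a - b) (min a 1 - b)]`, is a combination of differences of
counts in which the edge `e₁` carries the same bounded weight `min a 1` or `b` in both hypergraphs,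
so the induction hypothesis applies.
-/

open Finset

/-- The average (expectation with respect to the uniform measure) of `f` over `α`. -/
noncomputable def avg {α : Type*} [Fintype α] (f : α → ℝ) : ℝ :=
  (∑ x, f x) / (Fintype.card α)

variable {J : Type} [Fintype J] [DecidableEq J] {V : J → Type}

/-- Restriction (projection) of a full tuple `x ∈ V_J` to the coordinates in `e`. -/
def restr (e : Finset J) (x : (j : J) → V j) : (i : ↥e) → V i := fun i => x i.1

/-- Projection of a tuple indexed by `e` to the coordinates in the face `e.erase j`. -/
def faceProj {e : Finset J} (j : J) (x : (i : ↥e) → V i) :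
    (i : ↥(e.erase j)) → V i :=
  fun i => x ⟨i.1, Finset.mem_of_mem_erase i.2⟩

/-- The product `∏_{f ∈ ∂e} 1_{B_f}(x_f)` of the indicators of the sets `B_f ⊆ V_f`
over the faces `f = e.erase j`, `j ∈ e`, of `e`. -/
noncomputable def faceInd (e : Finset J)
    (B : (j : J) → Set ((i : ↥(e.erase j)) → V i)) (x : (i : ↥e) → V i) : ℝ :=
  ∏ j ∈ e, Set.indicator (B j) (fun _ => (1 : ℝ)) (faceProj j x)

/-- `(g, g')` is an `ε`-discrepancy pair on the edge `e`: for all choices of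
`B_f ⊆ V_f` (`f ∈ ∂e`), `|E[(g(x_e) - g'(x_e)) ∏_{f ∈ ∂e} 1_{B_f}(x_f)]| ≤ ε`. -/
noncomputable def EdgeDiscrepancy [∀ j, Fintype (V j)] (e : Finset J)
    (g g' : ((i : ↥e) → V i) → ℝ) (ε : ℝ) : Prop :=
  ∀ B : (j : J) → Set ((i : ↥(e.erase j)) → V i),
    |avg (fun x : (i : ↥e) → V i => (g x - g' x) * faceInd e B x)| ≤ ε

/-- `g` is upper `η`-regular on the edge `e`: for all choices of `B_f ⊆ V_f`
(`f ∈ ∂e`), `E[(g(x_e) - 1) ∏_{f ∈ ∂e} 1_{B_f}(x_f)] ≤ η`. -/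
noncomputable def EdgeUpperRegular [∀ j, Fintype (V j)] (e : Finset J)
    (g : ((i : ↥e) → V i) → ℝ) (η : ℝ) : Prop :=
  ∀ B : (j : J) → Set ((i : ↥(e.erase j)) → V i),
    avg (fun x : (i : ↥e) → V i => (g x - 1) * faceInd e B x) ≤ η

/-- `E ⊆ V_e` is the set of `r`-cliques of some `(r-1)`-uniform hypergraph: there are
sets `B_f ⊆ V_f` for the faces `f ∈ ∂e` with `1_E(x_e) = ∏_{f ∈ ∂e} 1_{B_f}(x_f)`. -/
def IsCliqueSet (e : Finset J) (E : Set ((i : ↥e) → V i)) : Prop :=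
  ∃ B : (j : J) → Set ((i : ↥(e.erase j)) → V i),
    ∀ x, x ∈ E ↔ ∀ j ∈ e, faceProj j x ∈ B j

/-- `E ⊆ V_e` has complexity at most `T`: it can be partitioned into `T` (possibly
empty) clique sets. -/
def ComplexityLE (e : Finset J) (E : Set ((i : ↥e) → V i)) (T : ℕ) : Prop :=
  ∃ P : Fin T → Set ((i : ↥e) → V i),
    (∀ i, IsCliqueSet e (P i)) ∧
    (∀ i₁ i₂, i₁ ≠ i₂ → P i₁ ∩ P i₂ = ∅) ∧
    (⋃ i, P i) = E

/-- The weighted hypergraph `ν` satisfies the `H`-linear forms condition within `η`: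
for every choice of exponents `n (e, ω) ∈ {0,1}` (`e ∈ H`, `ω ∈ {0,1}^e`),
`|E[∏_{e ∈ H} ∏_{ω ∈ {0,1}^e} ν_e(x_e^{(ω)})^{n_{e,ω}} | x⁰, x¹ ∈ V_J] - 1| ≤ η`. -/
noncomputable def HLinearForms [∀ j, Fintype (V j)] (H : Finset (Finset J))
    (ν : (e : Finset J) → ((i : ↥e) → V i) → ℝ) (η : ℝ) : Prop :=
  ∀ n : (e : Finset J) → (↥e → Bool) → Bool,
    |avg (fun x : ((j : J) → V j) × ((j : J) → V j) =>
      ∏ e ∈ H, ∏ ω : ↥e → Bool,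
        if n e ω then ν e (fun i => if ω i then x.2 i.1 else x.1 i.1) else 1) - 1| ≤ η

set_option linter.unusedSectionVars false

namespace RelCount

/-! ### Averages -/

section Average

variable {α β : Type*} [Fintype α] [Fintype β]

lemma avg_add (f g : α → ℝ) : avg (fun x => f x + g x) = avg f + avg g := by
  simp only [avg, Finset.sum_add_distrib, add_div]

lemma avg_sub (f g : α → ℝ) : avg (fun x => f x - g x) = avg f - avg g := by
  simp only [avg, Finset.sum_sub_distrib, sub_div]

lemma avg_const_mul (c : ℝ) (f : α → ℝ) : avg (fun x => c * f x) = c * avg f := by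
  simp only [avg, ← Finset.mul_sum, mul_div_assoc]

lemma avg_sum {ι : Type*} (s : Finset ι) (f : ι → α → ℝ) :
    avg (fun x => ∑ i ∈ s, f i x) = ∑ i ∈ s, avg (f i) := by
  simp only [avg, Finset.sum_div]
  exact Finset.sum_comm

lemma avg_mono {f g : α → ℝ} (h : ∀ x, f x ≤ g x) : avg f ≤ avg g :=
  div_le_div_of_nonneg_right (Finset.sum_le_sum fun x _ => h x) (Nat.cast_nonneg _)

lemma avg_nonneg {f : α → ℝ} (h : ∀ x, 0 ≤ f x) : 0 ≤ avg f :=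
  div_nonneg (Finset.sum_nonneg fun x _ => h x) (Nat.cast_nonneg _)

lemma avg_const [Nonempty α] (c : ℝ) : avg (fun _ : α => c) = c := by
  have : (Fintype.card α : ℝ) ≠ 0 := Nat.cast_ne_zero.mpr Fintype.card_ne_zero
  simp [avg, this]

lemma avg_equiv (σ : α ≃ β) (f : β → ℝ) : avg (fun x => f (σ x)) = avg f := by
  simp only [avg, Equiv.sum_comp σ f, Fintype.card_congr σ]

lemma avg_prod (f : α → β → ℝ) :
    avg (fun z : α × β => f z.1 z.2) = avg fun x => avg fun y => f x y := by
  simp only [avg, Fintype.sum_prod_type, Fintype.card_prod, Nat.cast_mul, ← Finset.sum_div,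
    div_div]
  rw [mul_comm]

lemma avg_comm (f : α → β → ℝ) :
    (avg fun x => avg fun y => f x y) = avg fun y => avg fun x => f x y := by
  simp only [avg, ← Finset.sum_div, div_div]
  rw [Finset.sum_comm, mul_comm]

lemma abs_avg_le [Nonempty α] {f : α → ℝ} {c : ℝ} (h : ∀ x, |f x| ≤ c) : |avg f| ≤ c := by
  rw [abs_le]
  constructor
  · rw [← avg_const (α := α) (-c)]
    exact avg_mono fun x => (abs_le.mp (h x)).1
  · rw [← avg_const (α := α) c]
    exact avg_mono fun x => (abs_le.mp (h x)).2

/-- Cauchy–Schwarz with respect to a nonnegative weight `p`. -/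
lemma avg_mul_sq_le {p : α → ℝ} (q : α → ℝ) (hp : ∀ x, 0 ≤ p x) :
    (avg fun x => p x * q x) ^ 2 ≤ avg p * avg fun x => p x * q x ^ 2 := by
  have h := Finset.sum_sq_le_sum_mul_sum_of_sq_le_mul (Finset.univ : Finset α)
    (r := fun x => p x * q x) (f := p) (g := fun x => p x * q x ^ 2)
    (fun x _ => hp x) (fun x _ => mul_nonneg (hp x) (sq_nonneg _)) (fun x _ => le_of_eq (by ring))
  simp only [avg, div_pow, div_mul_div_comm]
  rw [← pow_two]
  gcongr

end Average

/-! ### Mixing and resampling coordinates -/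

/-- `f` depends only on the coordinates in `e`. Functions on `V_e` are encoded throughout as
functions on `V_J` with this property. -/
def Dep (e : Finset J) (f : ((j : J) → V j) → ℝ) : Prop :=
  ∀ x y, (∀ i ∈ e, x i = y i) → f x = f y

/-- The point with the coordinates of `y` on `A` and those of `x` elsewhere; for `A ⊆ e` the
projection to `e` of this point is `x_e^{(ω)}` with `ω` the indicator of `A`. -/
def mix (A : Finset J) (x y : (j : J) → V j) : (j : J) → V j :=
  fun j => if j ∈ A then y j else x j

lemma mix_empty (x y : (j : J) → V j) : mix ∅ x y = x := by
  ext j; simp [mix]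

lemma mix_update_right {A : Finset J} {j : J} (hj : j ∉ A) (x y : (j : J) → V j) (v : V j) :
    mix A x (Function.update y j v) = mix A x y := by
  ext i
  by_cases h : i = j
  · subst h; simp [mix, hj]
  · simp [mix, h]

lemma mix_update_left (A : Finset J) (j : J) (x y : (j : J) → V j) :
    mix A (Function.update x j (y j)) y = mix (insert j A) x y := by
  ext i
  by_cases h : i = j
  · subst h; simp [mix]
  · simp [mix, h]

lemma Dep.mix_update {e : Finset J} {f : ((j : J) → V j) → ℝ} (hf : Dep e f) {j : J} (hj : j ∉ e)
    (A : Finset J) (x y : (j : J) → V j) (v w : V j) :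
    f (mix A (Function.update x j v) (Function.update y j w)) = f (mix A x y) := by
  apply hf
  intro i hi
  have h : i ≠ j := fun h => hj (h ▸ hi)
  simp [mix, h]

lemma Dep.update {e : Finset J} {f : ((j : J) → V j) → ℝ} (hf : Dep e f) {j : J} (hj : j ∉ e)
    (x : (j : J) → V j) (v : V j) : f (Function.update x j v) = f x := by
  apply hf
  intro i hi
  have h : i ≠ j := fun h => hj (h ▸ hi)
  simp [h]

lemma Dep.mul {e : Finset J} {f g : ((j : J) → V j) → ℝ} (hf : Dep e f) (hg : Dep e g) :
    Dep e (fun x => f x * g x) := fun x y h => by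
  simp only [hf x y h, hg x y h]

lemma Dep.mono {e e' : Finset J} (h : e ⊆ e') {f : ((j : J) → V j) → ℝ} (hf : Dep e f) :
    Dep e' f := fun x y hxy => hf x y fun i hi => hxy i (h hi)

section Resample

variable [∀ j, Fintype (V j)] [∀ j, Nonempty (V j)]

/-- Averaging is unchanged when the coordinate `j` is resampled. -/
lemma avg_update (j : J) (f : ((j : J) → V j) → ℝ) :
    (avg fun x => avg fun v : V j => f (Function.update x j v)) = avg f := by
  let σ : (((j : J) → V j) × V j) ≃ (((j : J) → V j) × V j) :=
    { toFun := fun p => (Function.update p.1 j p.2, p.1 j)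
      invFun := fun p => (Function.update p.1 j p.2, p.1 j)
      left_inv := fun p => by simp
      right_inv := fun p => by simp }
  rw [← avg_prod (fun (x : (j : J) → V j) (v : V j) => f (Function.update x j v))]
  have := avg_equiv σ (fun p => f p.1)
  simp only [σ, Equiv.coe_fn_mk] at this
  rw [this, avg_prod (fun (x : (j : J) → V j) (_ : V j) => f x)]
  simp only [avg_const]

/-- Averaging is unchanged when the coordinates in `A` are resampled. -/
lemma avg_mix (A : Finset J) (f : ((j : J) → V j) → ℝ) :
    (avg fun x => avg fun y => f (mix A x y)) = avg f := by
  let σ : (((j : J) → V j) × ((j : J) → V j)) ≃ (((j : J) → V j) × ((j : J) → V j)) :=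
    { toFun := fun p => (mix A p.1 p.2, mix A p.2 p.1)
      invFun := fun p => (mix A p.1 p.2, mix A p.2 p.1)
      left_inv := fun p => by
        ext i <;> by_cases h : i ∈ A <;> simp [mix, h]
      right_inv := fun p => by
        ext i <;> by_cases h : i ∈ A <;> simp [mix, h] }
  rw [← avg_prod (fun x y => f (mix A x y))]
  have := avg_equiv σ (fun p => f p.1)
  simp only [σ, Equiv.coe_fn_mk] at this
  rw [this, avg_prod (fun (x : (j : J) → V j) (_ : (j : J) → V j) => f x)]
  simp only [avg_const]

/-- Averages over `V_e` agree with averages over `V_J`. -/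
lemma avg_restr (e : Finset J) (f : ((i : ↥e) → V i) → ℝ) :
    (avg fun x : (j : J) → V j => f (restr e x)) = avg f := by
  have h := avg_equiv (Equiv.piEquivPiSubtypeProd (fun j => j ∈ e) V) (fun p => f p.1)
  have h2 : (fun x : (j : J) → V j => f (restr e x)) =
      fun x => f ((Equiv.piEquivPiSubtypeProd (fun j => j ∈ e) V) x).1 := rfl
  rw [h2, h, avg_prod (fun (x : (i : ↥e) → V i) (_ : (i : {j // j ∉ e}) → V i) => f x)]
  simp only [avg_const]

/-- One Cauchy–Schwarz step in the coordinate `j`: the factor `P`, which does not involve this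
coordinate, is replaced by its majorant `N`, and the coordinate `j` of the first point is doubled
in the remaining factor `Q`, with the coordinate `j` of the second point (not used by `Q`)
serving as the copy. -/
lemma cauchySchwarz_step (j : J) (P N Q : ((j : J) → V j) → ((j : J) → V j) → ℝ)
    (hP : ∀ x y v w, P (Function.update x j v) (Function.update y j w) = P x y)
    (hN : ∀ x y v w, N (Function.update x j v) (Function.update y j w) = N x y)
    (hQ : ∀ x y w, Q x (Function.update y j w) = Q x y)
    (hP0 : ∀ x y, 0 ≤ P x y) (hPN : ∀ x y, P x y ≤ N x y) :
    (avg fun x => avg fun y => P x y * Q x y) ^ 2 ≤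
      (avg fun x => avg fun y => N x y) *
        avg fun x => avg fun y => N x y * (Q x y * Q (Function.update x j (y j)) y) := by
  set R : ((j : J) → V j) → ((j : J) → V j) → ℝ :=
    fun x y => avg fun v : V j => Q (Function.update x j v) y with hR
  have hNx : ∀ x y v, N (Function.update x j v) y = N x y := fun x y v => by
    simpa using hN x y v (y j)
  have hPx : ∀ x y v, P (Function.update x j v) y = P x y := fun x y v => by
    simpa using hP x y v (y j)
  have hNy : ∀ x y w, N x (Function.update y j w) = N x y := fun x y v => by
    simpa using hN x y (x j) v
  -- Resampling the coordinate `j` of `x` replaces `Q` by its average `R`.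
  have key : ∀ F : ((j : J) → V j) → ((j : J) → V j) → ℝ,
      (∀ x y v, F (Function.update x j v) y = F x y) →
      (avg fun x => avg fun y => F x y * Q x y) = avg fun x => avg fun y => F x y * R x y := by
    intro F hF
    rw [avg_comm, avg_comm (fun x y => F x y * R x y)]
    congr 1; ext y
    rw [← avg_update j]
    congr 1; ext x
    simp only [hF, avg_const_mul, hR]
  have h1 := key P hPx
  have h2 : (avg fun x => avg fun y => N x y * (Q x y * Q (Function.update x j (y j)) y)) =
      avg fun x => avg fun y => N x y * R x y ^ 2 := by
    have hRx : ∀ x y v, N (Function.update x j v) y * R (Function.update x j v) y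
        = N x y * R x y := by
      intro x y v
      simp [hNx, hR]
    have h3 := key (fun x y => N x y * R x y) hRx
    have h4 : (avg fun x => avg fun y => N x y * (Q x y * Q (Function.update x j (y j)) y)) =
        avg fun x => avg fun y => N x y * R x y * Q x y := by
      congr 1; ext x
      rw [← avg_update j]
      congr 1; ext y
      simp only [hNy, hQ, Function.update_self, avg_const_mul, hR]
      ring
    rw [h4, h3]
    congr 1; ext x; congr 1; ext y; ring
  rw [h1, h2]
  have h5 := avg_mul_sq_le (α := ((j : J) → V j) × ((j : J) → V j)) (p := fun z => P z.1 z.2)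
    (fun z => R z.1 z.2) (fun z => hP0 _ _)
  rw [avg_prod (fun x y => P x y * R x y), avg_prod (fun x y => P x y),
    avg_prod (fun x y => P x y * R x y ^ 2)] at h5
  refine h5.trans ?_
  apply mul_le_mul
  · exact avg_mono fun x => avg_mono fun y => hPN x y
  · exact avg_mono fun x => avg_mono fun y => mul_le_mul_of_nonneg_right (hPN x y) (sq_nonneg _)
  · exact avg_nonneg fun x => avg_nonneg fun y => mul_nonneg (hP0 x y) (sq_nonneg _)
  · exact avg_nonneg fun x => avg_nonneg fun y => (hP0 x y).trans (hPN x y)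

end Resample

/-! ### The linear forms condition -/

section LinearForms

variable [∀ j, Fintype (V j)] [∀ j, Nonempty (V j)]

/-- The `H`-linear forms condition within `η`, for weights encoded as functions on `V_J`. The
exponents are given by the finite sets `T e ⊆ 𝒫(e)` of those `ω`, identified with subsets
of `e`, whose exponent is `1`. -/
def LF (H : Finset (Finset J)) (ν : Finset J → ((j : J) → V j) → ℝ) (η : ℝ) : Prop :=
  ∀ T : Finset J → Finset (Finset J), (∀ e ∈ H, T e ⊆ e.powerset) →
    |(avg fun x => avg fun y => ∏ e ∈ H, ∏ A ∈ T e, ν e (mix A x y)) - 1| ≤ η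

/-- The weight `ν e` or the constant `1`, according to `b`. -/
def maj (ν : Finset J → ((j : J) → V j) → ℝ) (b : Bool) (e : Finset J) (x : (j : J) → V j) : ℝ :=
  if b then ν e x else 1

/-- The special linear forms needed below. The coordinates outside `e₁` are doubled only
simultaneously, so the two copies of an edge `e ≠ e₁` of the same size use different
coordinates on the nonempty set `e \ e₁`, and each factor appears at most once. -/
lemma LF.special {H : Finset (Finset J)} {ν : Finset J → ((j : J) → V j) → ℝ} {η : ℝ}
    (hLF : LF H ν η) {r : ℕ} (hr : ∀ e ∈ H, e.card = r) (hν : ∀ e ∈ H, Dep e (ν e))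
    {e₁ : Finset J} (he₁ : e₁ ∈ H) {F : Finset (Finset J)} (hF : F ⊆ H.erase e₁)
    {I : Finset J} (hI : I ⊆ e₁) {R : Finset (Finset J)} (hR : R ⊆ e₁.powerset) (b₀ b₁ : Bool) :
    |(avg fun x => avg fun y => (∏ A ∈ R, ν e₁ (mix A x y)) *
      ∏ e ∈ F, ∏ A ∈ (e ∩ I).powerset,
        (maj ν b₀ e (mix A x y) * maj ν b₁ e (mix (A ∪ e₁ᶜ) x y))) - 1| ≤ η := by
  classical
  set T : Finset J → Finset (Finset J) := fun e =>
    if e = e₁ then R else if e ∈ F then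
      (if b₀ then (e ∩ I).powerset else ∅) ∪
        (if b₁ then (e ∩ I).powerset.image (fun A => A ∪ (e \ e₁)) else ∅)
    else ∅ with hT
  have hTs : ∀ e ∈ H, T e ⊆ e.powerset := by
    intro e _
    by_cases h1 : e = e₁
    · subst h1; simpa [hT] using hR
    by_cases h2 : e ∈ F
    · simp only [hT, h1, h2, if_true, if_false]
      intro A hA
      rw [Finset.mem_union] at hA
      rw [Finset.mem_powerset]
      rcases hA with hA | hA
      · cases b₀
        · simp at hA
        · simp only [if_true, Finset.mem_powerset] at hA
          exact hA.trans Finset.inter_subset_left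
      · cases b₁
        · simp at hA
        · simp only [if_true, Finset.mem_image, Finset.mem_powerset] at hA
          obtain ⟨B, hB, rfl⟩ := hA
          exact Finset.union_subset (hB.trans Finset.inter_subset_left) Finset.sdiff_subset
    · simp [hT, h1, h2]
  have h := hLF T hTs
  convert h using 6 with x y
  ext y
  rw [← Finset.mul_prod_erase H _ he₁]
  have hT1 : T e₁ = R := by simp [hT]
  rw [hT1]
  congr 1
  rw [← Finset.prod_subset hF]
  · refine Finset.prod_congr rfl fun e he => ?_
    have heH := hF he
    rw [Finset.mem_erase] at heH
    have hTe : T e = (if b₀ then (e ∩ I).powerset else ∅) ∪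
        (if b₁ then (e ∩ I).powerset.image (fun A => A ∪ (e \ e₁)) else ∅) := by
      simp [hT, heH.1, he]
    -- An element of `e \ e₁` separates the two families of subsets of `e`.
    obtain ⟨k, hke, hk1⟩ : ∃ k ∈ e, k ∉ e₁ := by
      by_contra hcon
      push Not at hcon
      exact heH.1 (Finset.eq_of_subset_of_card_le hcon (by rw [hr e heH.2, hr e₁ he₁]))
    have hsub : ∀ B ∈ (e ∩ I).powerset, B ⊆ e₁ := fun B hB =>
      (Finset.mem_powerset.mp hB).trans (Finset.inter_subset_right.trans hI)
    rw [hTe, Finset.prod_union, Finset.prod_mul_distrib]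
    · congr 1
      · cases b₀ <;> simp [maj]
      · cases b₁
        · simp [maj]
        · simp only [if_true, maj]
          rw [Finset.prod_image]
          · refine Finset.prod_congr rfl fun A _ => hν e heH.2 _ _ fun i hi => ?_
            simp [mix, hi]
          · intro A hA B hB hAB
            have hA' := hsub A hA
            have hB' := hsub B hB
            ext i
            have := Finset.ext_iff.mp hAB i
            simp only [Finset.mem_union, Finset.mem_sdiff] at this
            constructor
            · intro hi
              have h1 := hA' hi
              tauto
            · intro hi
              have h1 := hB' hi
              tauto
    · cases b₀
      · simp
      cases b₁
      · simp
      simp only [if_true]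
      rw [Finset.disjoint_left]
      intro A hA hA'
      rw [Finset.mem_image] at hA'
      obtain ⟨B, _, rfl⟩ := hA'
      exact hk1 (hsub _ hA (by simp [hke, hk1]))
  · intro e he heF
    rw [Finset.mem_erase] at he
    simp [hT, he.1, heF]

/-- The special linear forms average with every factor `ν e₁` replaced by `ν e₁ - 1`: expanding
the product over `A ⊆ e₁` gives an alternating sum of averages close to `1`. -/
lemma LF.special_sub_one {H : Finset (Finset J)} {ν : Finset J → ((j : J) → V j) → ℝ} {η : ℝ}
    (hLF : LF H ν η) {r : ℕ} (hr : ∀ e ∈ H, e.card = r) (hν : ∀ e ∈ H, Dep e (ν e))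
    {e₁ : Finset J} (he₁ : e₁ ∈ H) (b₀ b₁ : Bool) :
    |avg fun x => avg fun y => (∏ A ∈ e₁.powerset, (ν e₁ (mix A x y) - 1)) *
      ∏ e ∈ H.erase e₁, ∏ A ∈ (e ∩ e₁).powerset,
        (maj ν b₀ e (mix A x y) * maj ν b₁ e (mix (A ∪ e₁ᶜ) x y))| ≤ 2 ^ 2 ^ r * η := by
  classical
  set L : Finset (Finset J) → ℝ := fun R => avg fun x => avg fun y =>
    (∏ A ∈ R, ν e₁ (mix A x y)) *
      ∏ e ∈ H.erase e₁, ∏ A ∈ (e ∩ e₁).powerset,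
        (maj ν b₀ e (mix A x y) * maj ν b₁ e (mix (A ∪ e₁ᶜ) x y)) with hL
  set s : Finset (Finset J) → ℝ := fun R => ∏ _A ∈ e₁.powerset \ R, (-1 : ℝ) with hs
  have h1 : (avg fun x => avg fun y => (∏ A ∈ e₁.powerset, (ν e₁ (mix A x y) - 1)) *
      ∏ e ∈ H.erase e₁, ∏ A ∈ (e ∩ e₁).powerset,
        (maj ν b₀ e (mix A x y) * maj ν b₁ e (mix (A ∪ e₁ᶜ) x y))) =
      ∑ R ∈ e₁.powerset.powerset, s R * L R := by
    simp only [hL, ← avg_const_mul, ← avg_sum]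
    congr 1; ext x; congr 1; ext y
    simp only [sub_eq_add_neg]
    rw [Finset.prod_add, Finset.sum_mul]
    refine Finset.sum_congr rfl fun R _ => ?_
    simp only [hs]
    ring
  have h2 : ∑ R ∈ e₁.powerset.powerset, s R = 0 := by
    have := Finset.prod_add (fun _ : Finset J => (1 : ℝ)) (fun _ => -1) e₁.powerset
    simp only [Finset.prod_const_one, one_mul] at this
    rw [hs, ← this]
    simp
  have h3 : ∑ R ∈ e₁.powerset.powerset, s R * L R =
      ∑ R ∈ e₁.powerset.powerset, s R * (L R - 1) := by
    simp only [mul_sub, Finset.sum_sub_distrib, mul_one, h2, sub_zero]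
  rw [h1, h3]
  refine (Finset.abs_sum_le_sum_abs _ _).trans ?_
  have h4 : ∀ R ∈ e₁.powerset.powerset, |s R * (L R - 1)| ≤ η := by
    intro R hR
    have : |s R| = 1 := by simp [hs]
    rw [abs_mul, this, one_mul]
    exact hLF.special hr hν he₁ subset_rfl subset_rfl (Finset.mem_powerset.mp hR) b₀ b₁
  refine (Finset.sum_le_card_nsmul _ _ _ h4).trans ?_
  simp [Finset.card_powerset, hr e₁ he₁]

/-- Iterated Cauchy–Schwarz. The weight `ν e₁ - 1` is nearly orthogonal to every product over
two copies of the edges `e ≠ e₁`, with the coordinates outside `e₁` doubled, of weights `h₀ e`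
and `h₁ e` bounded by `ν e` or by `1`. After the coordinates in `I ⊆ e₁` have been doubled, the
weights of the edges missing a point of `I` have been replaced by their majorants; for `I = e₁`
these are all edges, and the linear forms condition applies. -/
lemma LF.strong {H : Finset (Finset J)} {ν : Finset J → ((j : J) → V j) → ℝ} {η : ℝ}
    (hLF : LF H ν η) (hη : η ≤ 1) {r : ℕ} (hr : ∀ e ∈ H, e.card = r)
    (hν : ∀ e ∈ H, Dep e (ν e)) {e₁ : Finset J} (he₁ : e₁ ∈ H) (b₀ b₁ : Bool)
    {h₀ h₁ : Finset J → ((j : J) → V j) → ℝ}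
    (hd₀ : ∀ e ∈ H, Dep e (h₀ e)) (hd₁ : ∀ e ∈ H, Dep e (h₁ e))
    (hb₀ : ∀ e ∈ H, ∀ x, 0 ≤ h₀ e x ∧ h₀ e x ≤ maj ν b₀ e x)
    (hb₁ : ∀ e ∈ H, ∀ x, 0 ≤ h₁ e x ∧ h₁ e x ≤ maj ν b₁ e x) :
    (|avg fun x => avg fun y => (ν e₁ x - 1) *
      ∏ e ∈ H.erase e₁, (h₀ e x * h₁ e (mix e₁ᶜ x y))| / 2) ^ 2 ^ r ≤ 2 ^ 2 ^ r * η := by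
  classical
  -- Edge weights and their doubled products after the coordinates in `I` have been treated.
  set k₀ : Finset J → Finset J → ((j : J) → V j) → ℝ :=
    fun I e x => if I ⊆ e then h₀ e x else maj ν b₀ e x with hk₀
  set k₁ : Finset J → Finset J → ((j : J) → V j) → ℝ :=
    fun I e x => if I ⊆ e then h₁ e x else maj ν b₁ e x with hk₁
  set W : Finset J → Finset J → ((j : J) → V j) → ((j : J) → V j) → ℝ := fun I e x y =>
    ∏ A ∈ (e ∩ I).powerset, (k₀ I e (mix A x y) * k₁ I e (mix (A ∪ e₁ᶜ) x y)) with hW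
  set N : Finset J → Finset J → ((j : J) → V j) → ((j : J) → V j) → ℝ := fun I e x y =>
    ∏ A ∈ (e ∩ I).powerset, (maj ν b₀ e (mix A x y) * maj ν b₁ e (mix (A ∪ e₁ᶜ) x y)) with hN
  set M : Finset J → ((j : J) → V j) → ((j : J) → V j) → ℝ := fun I x y =>
    ∏ A ∈ I.powerset, (ν e₁ (mix A x y) - 1) with hM
  set X : Finset J → ℝ := fun I => avg fun x => avg fun y =>
    M I x y * ∏ e ∈ H.erase e₁, W I e x y with hX
  have hmaj : ∀ b, ∀ e ∈ H, Dep e (maj ν b e) := by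
    intro b e he x y hxy
    simp only [maj, hν e he x y hxy]
  have hk₀d : ∀ I, ∀ e ∈ H, Dep e (k₀ I e) := by
    intro I e he x y hxy
    simp only [hk₀, hd₀ e he x y hxy, hmaj b₀ e he x y hxy]
  have hk₁d : ∀ I, ∀ e ∈ H, Dep e (k₁ I e) := by
    intro I e he x y hxy
    simp only [hk₁, hd₁ e he x y hxy, hmaj b₁ e he x y hxy]
  have hk₀b : ∀ I, ∀ e ∈ H, ∀ x, 0 ≤ k₀ I e x ∧ k₀ I e x ≤ maj ν b₀ e x := by
    intro I e he x
    have := hb₀ e he x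
    by_cases h : I ⊆ e
    · simpa [hk₀, h] using this
    · simpa [hk₀, h] using this.1.trans this.2
  have hk₁b : ∀ I, ∀ e ∈ H, ∀ x, 0 ≤ k₁ I e x ∧ k₁ I e x ≤ maj ν b₁ e x := by
    intro I e he x
    have := hb₁ e he x
    by_cases h : I ⊆ e
    · simpa [hk₁, h] using this
    · simpa [hk₁, h] using this.1.trans this.2
  have hstep : ∀ I j, j ∉ I → insert j I ⊆ e₁ → (|X I| / 2) ^ 2 ≤ |X (insert j I)| / 2 := by
    intro I j hjI hsub
    have hje : j ∈ e₁ := hsub (Finset.mem_insert_self _ _)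
    have hI : I ⊆ e₁ := (Finset.subset_insert _ _).trans hsub
    set F := (H.erase e₁).filter (fun e => j ∉ e) with hF
    set F' := (H.erase e₁).filter (fun e => ¬ j ∉ e) with hF'
    have hFH : ∀ e ∈ F, e ∈ H ∧ j ∉ e := fun e he => by
      simp only [hF, Finset.mem_filter, Finset.mem_erase] at he
      exact ⟨he.1.2, he.2⟩
    have hF'H : ∀ e ∈ F', e ∈ H ∧ j ∈ e := fun e he => by
      simp only [hF', Finset.mem_filter, Finset.mem_erase, not_not] at he
      exact ⟨he.1.2, he.2⟩
    have hsplit : ∀ I x y, ∏ e ∈ H.erase e₁, W I e x y =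
        (∏ e ∈ F, W I e x y) * ∏ e ∈ F', W I e x y := fun I x y =>
      (Finset.prod_filter_mul_prod_filter_not _ _ _).symm
    have hcs := cauchySchwarz_step j (fun x y => ∏ e ∈ F, W I e x y)
      (fun x y => ∏ e ∈ F, N I e x y) (fun x y => M I x y * ∏ e ∈ F', W I e x y)
      (fun x y v w => Finset.prod_congr rfl fun e he => Finset.prod_congr rfl fun A _ => by
        rw [(hk₀d I e (hFH e he).1).mix_update (hFH e he).2,
          (hk₁d I e (hFH e he).1).mix_update (hFH e he).2])
      (fun x y v w => Finset.prod_congr rfl fun e he => Finset.prod_congr rfl fun A _ => by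
        rw [(hmaj b₀ e (hFH e he).1).mix_update (hFH e he).2,
          (hmaj b₁ e (hFH e he).1).mix_update (hFH e he).2])
      (fun x y w => by
        congr 1
        · refine Finset.prod_congr rfl fun A hA => ?_
          rw [mix_update_right fun h => hjI (Finset.mem_powerset.mp hA h)]
        · refine Finset.prod_congr rfl fun e he => Finset.prod_congr rfl fun A hA => ?_
          have hjA : j ∉ A := fun h =>
            hjI (Finset.mem_inter.mp (Finset.mem_powerset.mp hA h)).2
          rw [mix_update_right hjA, mix_update_right (by simp [hjA, hje])])
      (fun x y => Finset.prod_nonneg fun e he => Finset.prod_nonneg fun A _ =>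
        mul_nonneg (hk₀b I e (hFH e he).1 _).1 (hk₁b I e (hFH e he).1 _).1)
      (fun x y => Finset.prod_le_prod (fun e he => Finset.prod_nonneg fun A _ =>
        mul_nonneg (hk₀b I e (hFH e he).1 _).1 (hk₁b I e (hFH e he).1 _).1)
        fun e he => Finset.prod_le_prod (fun A _ =>
          mul_nonneg (hk₀b I e (hFH e he).1 _).1 (hk₁b I e (hFH e he).1 _).1)
          fun A _ => mul_le_mul (hk₀b I e (hFH e he).1 _).2 (hk₁b I e (hFH e he).1 _).2
            (hk₁b I e (hFH e he).1 _).1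
            ((hk₀b I e (hFH e he).1 _).1.trans (hk₀b I e (hFH e he).1 _).2))
    have e1 : (avg fun x => avg fun y => (∏ e ∈ F, W I e x y) *
        (M I x y * ∏ e ∈ F', W I e x y)) = X I := by
      simp only [hX, hsplit]
      congr 1; ext x; congr 1; ext y; ring
    have e2 : (avg fun x => avg fun y => (∏ e ∈ F, N I e x y) *
        ((M I x y * ∏ e ∈ F', W I e x y) *
          (M I (Function.update x j (y j)) y *
            ∏ e ∈ F', W I e (Function.update x j (y j)) y))) = X (insert j I) := by
      simp only [hX, hsplit]
      congr 1; ext x; congr 1; ext y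
      have m1 : M (insert j I) x y = M I x y * M I (Function.update x j (y j)) y := by
        simp only [hM, mix_update_left]
        exact Finset.prod_powerset_insert hjI _
      have w1 : ∀ e ∈ F, W (insert j I) e x y = N I e x y := by
        intro e he
        have hj := (hFH e he).2
        have h1 : e ∩ insert j I = e ∩ I := Finset.inter_insert_of_notMem hj
        have h2 : ¬ insert j I ⊆ e := fun h => hj (h (Finset.mem_insert_self _ _))
        simp only [hW, hN, hk₀, hk₁, h1, if_neg h2]
      have w2 : ∀ e ∈ F', W (insert j I) e x y =
          W I e x y * W I e (Function.update x j (y j)) y := by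
        intro e he
        have hj := (hF'H e he).2
        have h1 : e ∩ insert j I = insert j (e ∩ I) := Finset.inter_insert_of_mem hj
        have h2 : insert j I ⊆ e ↔ I ⊆ e := by simp [Finset.insert_subset_iff, hj]
        have h3 : j ∉ e ∩ I := fun h => hjI (Finset.mem_inter.mp h).2
        simp only [hW, hk₀, hk₁, h1, h2, mix_update_left]
        rw [Finset.prod_powerset_insert h3]
        simp only [Finset.insert_union]
      rw [m1, Finset.prod_congr rfl w1, Finset.prod_congr rfl w2, Finset.prod_mul_distrib]
      ring
    beta_reduce at hcs
    rw [e1, e2] at hcs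
    have hNle : (avg fun x => avg fun y => ∏ e ∈ F, N I e x y) ≤ 2 := by
      have := hLF.special hr hν he₁ (F := F) (Finset.filter_subset _ _) hI
        (R := ∅) (Finset.empty_subset _) b₀ b₁
      simp only [Finset.prod_empty, one_mul] at this
      have := (abs_le.mp this).2
      simp only [hN]
      linarith
    have hN0 : 0 ≤ avg fun x => avg fun y => ∏ e ∈ F, N I e x y :=
      avg_nonneg fun x => avg_nonneg fun y => Finset.prod_nonneg fun e he =>
        Finset.prod_nonneg fun A _ => mul_nonneg
          ((hk₀b I e (hFH e he).1 _).1.trans (hk₀b I e (hFH e he).1 _).2)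
          ((hk₁b I e (hFH e he).1 _).1.trans (hk₁b I e (hFH e he).1 _).2)
    have : X I ^ 2 ≤ 2 * |X (insert j I)| :=
      hcs.trans ((mul_le_mul_of_nonneg_left (le_abs_self _) hN0).trans
        (mul_le_mul_of_nonneg_right hNle (abs_nonneg _)))
    rw [div_pow, sq_abs]
    linarith
  have hiter : ∀ I : Finset J, I ⊆ e₁ → (|X ∅| / 2) ^ 2 ^ I.card ≤ |X I| / 2 := by
    intro I
    induction I using Finset.induction_on with
    | empty => intro _; simp
    | insert j I hj ih =>
      intro hsub
      rw [Finset.card_insert_of_notMem hj, pow_succ, pow_mul]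
      exact (pow_le_pow_left₀ (by positivity) (ih ((Finset.subset_insert _ _).trans hsub)) 2).trans
        (hstep I j hj hsub)
  have hfin := hiter e₁ subset_rfl
  have hX0 : X ∅ = avg fun x => avg fun y => (ν e₁ x - 1) *
      ∏ e ∈ H.erase e₁, (h₀ e x * h₁ e (mix e₁ᶜ x y)) := by
    simp only [hX, hM, hW, hk₀, hk₁, Finset.inter_empty, Finset.powerset_empty,
      Finset.prod_singleton, mix_empty, Finset.empty_subset, if_true, Finset.empty_union]
  have hX1 : |X e₁| ≤ 2 ^ 2 ^ r * η := by
    have := hLF.special_sub_one hr hν he₁ b₀ b₁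
    convert this using 5 with x y
    simp only [hM]
    ext y; congr 1
    refine Finset.prod_congr rfl fun e he => ?_
    rw [Finset.mem_erase] at he
    have h2 : ¬ e₁ ⊆ e := fun h => he.1
      (Finset.eq_of_subset_of_card_le h (by rw [hr e he.2, hr e₁ he₁])).symm
    simp only [hW, hk₀, hk₁, if_neg h2]
  rw [hr e₁ he₁, hX0] at hfin
  have := abs_nonneg (X e₁)
  linarith

end LinearForms

/-! ### Discrepancy -/

section Discrepancy

variable [∀ j, Fintype (V j)] [∀ j, Nonempty (V j)]

/-- `f` has discrepancy at most `ε` on `e`, tested against products of `[0,1]`-valued functions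
`u j` of the coordinates in `e \ {j}`. -/
def Disc (e : Finset J) (f : ((j : J) → V j) → ℝ) (ε : ℝ) : Prop :=
  ∀ u : J → ((j : J) → V j) → ℝ, (∀ j ∈ e, Dep (e.erase j) (u j)) →
    (∀ j ∈ e, ∀ x, 0 ≤ u j x ∧ u j x ≤ 1) → |avg fun x => f x * ∏ j ∈ e, u j x| ≤ ε

/-- Testing against sets controls testing against `[0,1]`-valued functions: the average is linear
in each `u j`, hence maximal and minimal at indicator functions. The functions `u j` with `j ∉ s`
are already indicators. -/
lemma disc_aux {e : Finset J} {f : ((j : J) → V j) → ℝ} {ε : ℝ} (hf : Dep e f)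
    (h : ∀ u : J → ((j : J) → V j) → ℝ, (∀ j ∈ e, Dep (e.erase j) (u j)) →
      (∀ j ∈ e, ∀ x, u j x = 0 ∨ u j x = 1) → |avg fun x => f x * ∏ j ∈ e, u j x| ≤ ε)
    (s : Finset J) :
    ∀ u : J → ((j : J) → V j) → ℝ, (∀ j ∈ e, Dep (e.erase j) (u j)) →
      (∀ j ∈ e, ∀ x, 0 ≤ u j x ∧ u j x ≤ 1) → (∀ j ∈ e, j ∉ s → ∀ x, u j x = 0 ∨ u j x = 1) →
      |avg fun x => f x * ∏ j ∈ e, u j x| ≤ ε := by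
  classical
  induction s using Finset.induction_on with
  | empty => exact fun u hd _ h01 => h u hd fun j hj => h01 j hj (Finset.notMem_empty j)
  | insert k s hk ih =>
    intro u hd hb h01
    by_cases hke : k ∈ e
    swap
    · refine ih u hd hb fun j hj hjs => h01 j hj ?_
      rw [Finset.mem_insert]
      rintro (rfl | h)
      · exact hke hj
      · exact hjs h
    set c : ((j : J) → V j) → ℝ := fun x => f x * ∏ j ∈ e.erase k, u j x with hc
    set c' : ((j : J) → V j) → ℝ := fun x => avg fun v : V k => c (Function.update x k v) with hc'
    have hcd : Dep e c := by
      intro x y hxy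
      simp only [hc, hf x y hxy]
      congr 1
      refine Finset.prod_congr rfl fun j hj => ?_
      exact ((hd j (Finset.mem_of_mem_erase hj)).mono (Finset.erase_subset _ _)) x y hxy
    have hcd' : Dep (e.erase k) c' := by
      intro x y hxy
      simp only [hc']
      congr 1; ext v
      refine hcd _ _ fun i hi => ?_
      by_cases hik : i = k
      · subst hik; simp
      · simp [hik, hxy i (Finset.mem_erase.mpr ⟨hik, hi⟩)]
    have hswap : ∀ w : ((j : J) → V j) → ℝ, Dep (e.erase k) w →
        (avg fun x => f x * ∏ j ∈ e, (Function.update u k w) j x) = avg fun x => c' x * w x := by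
      intro w hw
      rw [← avg_update k]
      congr 1; ext x
      simp only [hc']
      rw [mul_comm, ← avg_const_mul]
      congr 1; ext v
      rw [← Finset.mul_prod_erase e _ hke, Function.update_self,
        hw.update (Finset.notMem_erase k e)]
      simp only [hc]
      have : ∏ j ∈ e.erase k, Function.update u k w j (Function.update x k v) =
          ∏ j ∈ e.erase k, u j (Function.update x k v) :=
        Finset.prod_congr rfl fun j hj => by
          rw [Function.update_of_ne (Finset.mem_erase.mp hj).1]
      rw [this]
      ring
    have happ : ∀ p : ℝ → Prop, |avg fun x => c' x * (if p (c' x) then 1 else 0)| ≤ ε := by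
      intro p
      have hw : Dep (e.erase k) (fun x => if p (c' x) then (1 : ℝ) else 0) := fun x y hxy => by
        simp only [hcd' x y hxy]
      rw [← hswap _ hw]
      apply ih
      · intro j hj
        by_cases hjk : j = k
        · subst hjk; simpa using hw
        · simpa [hjk] using hd j hj
      · intro j hj x
        by_cases hjk : j = k
        · subst hjk
          simp only [Function.update_self]
          split_ifs <;> simp
        · simpa [hjk] using hb j hj x
      · intro j hj hjs x
        by_cases hjk : j = k
        · subst hjk
          simp only [Function.update_self]
          split_ifs <;> simp
        · simpa [hjk] using h01 j hj (by simp [hjk, hjs]) x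
    have h0 := hswap (u k) (hd k hke)
    rw [Function.update_eq_self] at h0
    rw [h0, abs_le]
    constructor
    · refine (abs_le.mp (happ fun t => t < 0)).1.trans (avg_mono fun x => ?_)
      have := hb k hke x
      by_cases hx : c' x < 0
      · simp only [hx, if_true]
        nlinarith
      · simp only [hx, if_false, mul_zero]
        exact mul_nonneg (not_lt.mp hx) this.1
    · refine le_trans (avg_mono fun x => ?_) (abs_le.mp (happ fun t => 0 < t)).2
      have := hb k hke x
      by_cases hx : 0 < c' x
      · simp only [hx, if_true]
        nlinarith
      · simp only [hx, if_false, mul_zero]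
        exact mul_nonpos_of_nonpos_of_nonneg (not_lt.mp hx) this.1

lemma restr_dep (e : Finset J) (f : ((i : ↥e) → V i) → ℝ) :
    Dep e (fun x : (j : J) → V j => f (restr e x)) := fun x y h => by
  have : restr e x = restr e y := by
    ext i; exact h i.1 i.2
  simp only [this]

lemma disc_of_edgeDiscrepancy {e : Finset J} {g g' : ((i : ↥e) → V i) → ℝ} {ε : ℝ}
    (h : EdgeDiscrepancy e g g' ε) :
    Disc e (fun x => g (restr e x) - g' (restr e x)) ε := by
  classical
  intro u hd hb
  refine disc_aux (restr_dep e (fun t => g t - g' t)) ?_ e u hd hb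
    fun j hj hj' => absurd hj hj'
  clear hb hd u
  intro u hd h01
  have := h (fun j => {t | ∃ x, restr (e.erase j) x = t ∧ u j x = 1})
  rw [← avg_restr] at this
  convert this using 5 with x
  refine Finset.prod_congr rfl fun j hj => ?_
  have hiff : faceProj j (restr e x) ∈ {t | ∃ x, restr (e.erase j) x = t ∧ u j x = 1} ↔
      u j x = 1 := by
    constructor
    · rintro ⟨y, hy, hy1⟩
      rw [← hy1]
      refine hd j hj _ _ fun i hi => ?_
      exact (congrFun hy ⟨i, hi⟩).symm
    · intro hx
      exact ⟨x, rfl, hx⟩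
  by_cases hx : u j x = 1
  · rw [Set.indicator_of_mem (hiff.mpr hx), hx]
  · rw [Set.indicator_of_notMem (fun hm => hx (hiff.mp hm))]
    exact (h01 j hj x).resolve_right hx

lemma Disc.mono {e : Finset J} {f : ((j : J) → V j) → ℝ} {ε ε' : ℝ} (h : Disc e f ε)
    (hε : ε ≤ ε') : Disc e f ε' := fun u h1 h2 => (h u h1 h2).trans hε

/-- A function of small discrepancy on `e₁` is nearly orthogonal to `[0,1]`-valued weights on
other edges of the same size: for fixed coordinates outside `e₁`, each such weight misses a
coordinate of `e₁`. -/
lemma Disc.orthogonal {H : Finset (Finset J)} {r : ℕ} (hr : ∀ e ∈ H, e.card = r)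
    {e₁ : Finset J} (he₁ : e₁ ∈ H) {f : ((j : J) → V j) → ℝ} {ε : ℝ} (hf : Dep e₁ f)
    (hD : Disc e₁ f ε) {h : Finset J → ((j : J) → V j) → ℝ} (hd : ∀ e ∈ H, Dep e (h e))
    (hb : ∀ e ∈ H, ∀ x, 0 ≤ h e x ∧ h e x ≤ 1) :
    |avg fun x => f x * ∏ e ∈ H.erase e₁, h e x| ≤ ε := by
  classical
  have hex : ∀ e ∈ H.erase e₁, ∃ j, j ∈ e₁ ∧ j ∉ e := by
    intro e he
    rw [Finset.mem_erase] at he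
    by_contra hcon
    push Not at hcon
    exact he.1 (Finset.eq_of_subset_of_card_le hcon (by rw [hr e he.2, hr e₁ he₁])).symm
  rcases (H.erase e₁).eq_empty_or_nonempty with hE | ⟨e₂, he₂⟩
  · rw [hE]
    simpa using hD (fun _ _ => 1) (fun _ _ _ _ _ => rfl) (fun _ _ _ => by norm_num)
  have hJ : Nonempty J := ⟨(hex e₂ he₂).choose⟩
  choose! φ hφ using hex
  rw [← avg_mix e₁ᶜ, avg_comm]
  refine abs_avg_le fun y => ?_
  have := hD (fun j x => ∏ e ∈ (H.erase e₁).filter (fun e => φ e = j), h e (mix e₁ᶜ x y)) ?_ ?_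
  · convert this using 4 with x
    congr 1
    · exact hf _ _ fun i hi => by simp [mix, hi]
    · exact (Finset.prod_fiberwise_of_maps_to (fun e he => (hφ e he).1) _).symm
  · intro j hj x x' hxx
    refine Finset.prod_congr rfl fun e he => ?_
    rw [Finset.mem_filter] at he
    refine hd e (Finset.mem_of_mem_erase he.1) _ _ fun i hi => ?_
    by_cases hi1 : i ∈ e₁
    · have hij : i ≠ j := by
        rintro rfl
        exact (hφ e he.1).2 (he.2 ▸ hi)
      simp [mix, hi1, hxx i (Finset.mem_erase.mpr ⟨hij, hi1⟩)]
    · simp [mix, hi1]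
  · intro j hj x
    have hbe : ∀ e ∈ (H.erase e₁).filter (fun e => φ e = j),
        0 ≤ h e (mix e₁ᶜ x y) ∧ h e (mix e₁ᶜ x y) ≤ 1 := fun e he =>
      hb e (Finset.mem_of_mem_erase (Finset.mem_filter.mp he).1) _
    exact ⟨Finset.prod_nonneg fun e he => (hbe e he).1,
      Finset.prod_le_one (fun e he => (hbe e he).1) fun e he => (hbe e he).2⟩

end Discrepancy

/-! ### Densification -/

section Densify

variable [∀ j, Fintype (V j)] [∀ j, Nonempty (V j)]

lemma lf_of_hLinearForms {H : Finset (Finset J)} {ν : (e : Finset J) → ((i : ↥e) → V i) → ℝ}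
    {η : ℝ} (h : HLinearForms H ν η) : LF H (fun e x => ν e (restr e x)) η := by
  classical
  intro T hT
  have h1 := h (fun e ω => decide ((Finset.univ.filter (fun i : ↥e => ω i = true)).map
    (Function.Embedding.subtype _) ∈ T e))
  rw [← avg_prod (fun x y => ∏ e ∈ H, ∏ A ∈ T e, ν e (restr e (mix A x y)))]
  refine le_of_eq_of_le ?_ h1
  congr 3; ext z
  refine Finset.prod_congr rfl fun e he => ?_
  simp only [decide_eq_true_eq]
  rw [← Finset.prod_filter]
  have hinv : ∀ A ∈ T e, (Finset.univ.filter (fun i : ↥e => decide (i.1 ∈ A) = true)).map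
      (Function.Embedding.subtype _) = A := by
    intro A hA
    have hAe := Finset.mem_powerset.mp (hT e he hA)
    ext i
    simp only [Finset.mem_map, Finset.mem_filter, Finset.mem_univ, true_and, decide_eq_true_eq,
      Function.Embedding.coe_subtype, Subtype.exists, exists_and_left, exists_prop,
      exists_eq_right_right]
    exact ⟨fun h => h.1, fun h => ⟨h, hAe h⟩⟩
  refine Finset.prod_nbij' (fun A (i : ↥e) => decide (i.1 ∈ A))
    (fun ω => (Finset.univ.filter (fun i : ↥e => ω i = true)).map
      (Function.Embedding.subtype _)) ?_ ?_ hinv ?_ ?_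
  · intro A hA
    rw [Finset.mem_filter]
    refine ⟨Finset.mem_univ _, ?_⟩
    rw [hinv A hA]
    exact hA
  · intro ω hω
    exact (Finset.mem_filter.mp hω).2
  · intro ω _
    ext i
    simp
  · intro A _
    congr 1
    ext i
    simp [restr, mix]

lemma LF.mono {H : Finset (Finset J)} {ν : Finset J → ((j : J) → V j) → ℝ} {η η' : ℝ}
    (h : LF H ν η) (hη : η ≤ η') : LF H ν η' := fun T hT => (h T hT).trans hη

lemma prod_update {H : Finset (Finset J)} {e₁ : Finset J} (he₁ : e₁ ∈ H)
    (w : Finset J → ((j : J) → V j) → ℝ) (c : ((j : J) → V j) → ℝ) (x : (j : J) → V j) :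
    ∏ e ∈ H, Function.update w e₁ c e x = c x * ∏ e ∈ H.erase e₁, w e x := by
  rw [← Finset.mul_prod_erase H _ he₁, Function.update_self]
  congr 1
  exact Finset.prod_congr rfl fun e he => by
    rw [Function.update_of_ne (Finset.mem_erase.mp he).1]

lemma LF.update_one {H : Finset (Finset J)} {ν : Finset J → ((j : J) → V j) → ℝ} {η : ℝ}
    (h : LF H ν η) {e₁ : Finset J} (he₁ : e₁ ∈ H) :
    LF H (Function.update ν e₁ fun _ => 1) η := by
  intro T hT
  have := h (Function.update T e₁ ∅) (fun e he => by
    by_cases h1 : e = e₁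
    · subst h1; simp
    · simpa [h1] using hT e he)
  convert this using 6 with x
  ext y
  rw [← Finset.mul_prod_erase H _ he₁, ← Finset.mul_prod_erase H (fun e => ∏ A ∈ _, _) he₁]
  simp only [Function.update_self, Finset.prod_const_one, Finset.prod_empty]
  congr 1
  refine Finset.prod_congr rfl fun e he => ?_
  have h1 := (Finset.mem_erase.mp he).1
  simp [h1]

/-- The densified weight on `e₁`: the conditional expectation of `∏_{e ≠ e₁} w e` given the
coordinates in `e₁`. -/
noncomputable def marg (H : Finset (Finset J)) (e₁ : Finset J)
    (w : Finset J → ((j : J) → V j) → ℝ) (x : (j : J) → V j) : ℝ :=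
  avg fun y => ∏ e ∈ H.erase e₁, w e (mix e₁ᶜ x y)

lemma marg_dep (H : Finset (Finset J)) (e₁ : Finset J) (w : Finset J → ((j : J) → V j) → ℝ) :
    Dep e₁ (marg H e₁ w) := by
  intro x x' h
  have : ∀ y, mix e₁ᶜ x y = mix e₁ᶜ x' y := fun y => by
    ext i
    by_cases hi : i ∈ e₁
    · simp [mix, hi, h i hi]
    · simp [mix, hi]
  simp only [marg, this]

lemma avg_mul_marg (H : Finset (Finset J)) (e₁ : Finset J) (w : Finset J → ((j : J) → V j) → ℝ)
    {c : ((j : J) → V j) → ℝ} (hc : Dep e₁ c) :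
    (avg fun x => c x * marg H e₁ w x) = avg fun x => c x * ∏ e ∈ H.erase e₁, w e x := by
  rw [← avg_mix e₁ᶜ (fun x => c x * ∏ e ∈ H.erase e₁, w e x)]
  congr 1; ext x
  rw [marg, ← avg_const_mul]
  congr 1; ext y
  rw [hc x (mix e₁ᶜ x y) fun i hi => by simp [mix, hi]]

lemma avg_mul_marg_mul_marg (H : Finset (Finset J)) (e₁ : Finset J)
    (w w' : Finset J → ((j : J) → V j) → ℝ) {c : ((j : J) → V j) → ℝ} (hc : Dep e₁ c) :
    (avg fun x => c x * (marg H e₁ w x * marg H e₁ w' x)) =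
      avg fun x => avg fun y => c x * ∏ e ∈ H.erase e₁, (w e x * w' e (mix e₁ᶜ x y)) := by
  have h := avg_mul_marg H e₁ w (hc.mul (marg_dep H e₁ w'))
  have h1 : (avg fun x => c x * (marg H e₁ w x * marg H e₁ w' x)) =
      avg fun x => c x * marg H e₁ w' x * marg H e₁ w x := by
    congr 1; ext x; ring
  rw [h1, h]
  congr 1; ext x
  rw [marg, mul_right_comm, ← avg_const_mul]
  congr 1; ext y
  rw [Finset.prod_mul_distrib]
  ring

lemma marg_mono {H : Finset (Finset J)} {e₁ : Finset J} {w w' : Finset J → ((j : J) → V j) → ℝ}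
    (h : ∀ e ∈ H, ∀ x, 0 ≤ w e x ∧ w e x ≤ w' e x) (x : (j : J) → V j) :
    marg H e₁ w x ≤ marg H e₁ w' x :=
  avg_mono fun _ => Finset.prod_le_prod (fun e he => (h e (Finset.mem_of_mem_erase he) _).1)
    fun e he => (h e (Finset.mem_of_mem_erase he) _).2

lemma marg_nonneg {H : Finset (Finset J)} {e₁ : Finset J} {w : Finset J → ((j : J) → V j) → ℝ}
    (h : ∀ e ∈ H, ∀ x, 0 ≤ w e x) (x : (j : J) → V j) : 0 ≤ marg H e₁ w x :=
  avg_nonneg fun _ => Finset.prod_nonneg fun e he => h e (Finset.mem_of_mem_erase he) _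

/-- The densified majorant is close to `1` in mean square. -/
lemma LF.marg_sub_one_sq {H : Finset (Finset J)} {ν : Finset J → ((j : J) → V j) → ℝ} {η : ℝ}
    (hLF : LF H ν η) {r : ℕ} (hr : ∀ e ∈ H, e.card = r) (hν : ∀ e ∈ H, Dep e (ν e))
    {e₁ : Finset J} (he₁ : e₁ ∈ H) :
    (avg fun x => (marg H e₁ ν x - 1) ^ 2) ≤ 3 * η := by
  have h2 := hLF.special hr hν he₁ (F := H.erase e₁) subset_rfl (I := ∅) (by simp)
    (R := ∅) (by simp) true true
  have h1 := hLF.special hr hν he₁ (F := H.erase e₁) subset_rfl (I := ∅) (by simp)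
    (R := ∅) (by simp) true false
  have hone : Dep e₁ (fun _ : (j : J) → V j => (1 : ℝ)) := fun _ _ _ => rfl
  have k2 := avg_mul_marg_mul_marg H e₁ ν ν hone
  have k1 := avg_mul_marg H e₁ ν hone
  simp only [maj, Finset.inter_empty, Finset.powerset_empty, Finset.prod_singleton,
    Finset.prod_empty, one_mul, mix_empty, Finset.empty_union, if_true, mul_one,
    Bool.false_eq_true, if_false, avg_const] at h1 h2 k1 k2
  rw [← k2] at h2
  rw [← k1] at h1
  have h3 : (avg fun x => (marg H e₁ ν x - 1) ^ 2) =
      (avg fun x => marg H e₁ ν x * marg H e₁ ν x) - 2 * (avg fun x => marg H e₁ ν x) + 1 := by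
    rw [← avg_const_mul, ← avg_sub, ← avg_const (α := (j : J) → V j) 1, ← avg_add]
    congr 1; ext x; rw [avg_const]; ring
  rw [h3]
  linarith [(abs_le.mp h2).2, (abs_le.mp h1).1]

end Densify

/-! ### The counting lemma -/

section Counting

variable [∀ j, Fintype (V j)] [∀ j, Nonempty (V j)]

/-- The analytic core of the densification step. Here `G ≤ N` is the sparse weight on `e₁` and its
majorant, `a` and `b` are the densified weights coming from the sparse and from the dense
hypergraph, and `n` is the densified majorant. -/
lemma sparse_bound {α : Type*} [Fintype α] [Nonempty α] {G N a b n : α → ℝ} {κ δ θ η γ' : ℝ}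
    (hθ : 0 < θ) (hG0 : ∀ x, 0 ≤ G x) (hGN : ∀ x, G x ≤ N x)
    (ha : ∀ x, 0 ≤ a x ∧ a x ≤ n x) (hb : ∀ x, 0 ≤ b x ∧ b x ≤ 1)
    (hN : avg N ≤ 2) (hn : (avg fun x => (n x - 1) ^ 2) ≤ 3 * η)
    (haa : |avg fun x => (N x - 1) * (a x * a x)| ≤ δ)
    (hab : |avg fun x => (N x - 1) * (a x * b x)| ≤ δ)
    (hbb : |avg fun x => (N x - 1) * (b x * b x)| ≤ δ)
    (hca : |(avg fun x => min (a x) 1 * a x) - avg fun x => min (a x) 1 * b x| ≤ γ')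
    (hcb : |(avg fun x => b x * a x) - avg fun x => b x * b x| ≤ γ')
    (hκ : 2 * (4 * δ + (θ + (1 + 1 / θ) * (3 * η)) + 2 * γ') ≤ κ ^ 2) (hκ0 : 0 ≤ κ) :
    |avg fun x => G x * (a x - b x)| ≤ κ := by
  -- Capping `a` at `1` costs little, since `a ≤ n` and `n` is close to `1`.
  have hcap : (avg fun x => (a x - b x) * (a x - min (a x) 1)) ≤
      θ + (1 + 1 / θ) * (3 * η) := by
    calc _ ≤ avg fun x => θ + (1 + 1 / θ) * (n x - 1) ^ 2 := by
          refine avg_mono fun x => ?_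
          have hsq : 0 ≤ (1 + 1 / θ) * (n x - 1) ^ 2 := by positivity
          rcases le_total (a x) 1 with h1 | h1
          · rw [min_eq_left h1, sub_self, mul_zero]
            linarith
          · rw [min_eq_right h1]
            have h2 : (a x - b x) * (a x - 1) ≤ n x * (n x - 1) :=
              mul_le_mul (by linarith [(ha x).2, (hb x).1]) (by linarith [(ha x).2])
                (by linarith) (by linarith [(ha x).1, (ha x).2])
            have h3 : n x - 1 ≤ θ + 1 / θ * (n x - 1) ^ 2 := by
              have : θ + 1 / θ * (n x - 1) ^ 2 - (n x - 1) =
                  1 / θ * ((n x - 1 - θ / 2) ^ 2 + 3 / 4 * θ ^ 2) := by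
                field_simp
                ring
              have h4 : 0 ≤ 1 / θ * ((n x - 1 - θ / 2) ^ 2 + 3 / 4 * θ ^ 2) := by positivity
              linarith
            nlinarith
      _ = θ + (1 + 1 / θ) * avg fun x => (n x - 1) ^ 2 := by
          rw [avg_add, avg_const, avg_const_mul]
      _ ≤ _ := by gcongr
  have hD2 : (avg fun x => (a x - b x) ^ 2) ≤ θ + (1 + 1 / θ) * (3 * η) + 2 * γ' := by
    have : (avg fun x => (a x - b x) ^ 2) =
        (avg fun x => (a x - b x) * (a x - min (a x) 1)) +
          (((avg fun x => min (a x) 1 * a x) - avg fun x => min (a x) 1 * b x) -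
            ((avg fun x => b x * a x) - avg fun x => b x * b x)) := by
      rw [← avg_sub, ← avg_sub, ← avg_sub, ← avg_add]
      congr 1; ext x; ring
    rw [this]
    linarith [(abs_le.mp hca).2, (abs_le.mp hcb).1]
  have hND : (avg fun x => N x * (a x - b x) ^ 2) ≤
      4 * δ + (θ + (1 + 1 / θ) * (3 * η)) + 2 * γ' := by
    have : (avg fun x => N x * (a x - b x) ^ 2) =
        ((avg fun x => (N x - 1) * (a x * a x)) - 2 * (avg fun x => (N x - 1) * (a x * b x)) +
          avg fun x => (N x - 1) * (b x * b x)) + avg fun x => (a x - b x) ^ 2 := by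
      rw [← avg_const_mul, ← avg_sub, ← avg_add, ← avg_add]
      congr 1; ext x; ring
    rw [this]
    linarith [(abs_le.mp haa).2, (abs_le.mp hab).1, (abs_le.mp hbb).2]
  have hcs := avg_mul_sq_le (fun x => a x - b x) hG0
  have hGD : (avg fun x => G x * (a x - b x) ^ 2) ≤ avg fun x => N x * (a x - b x) ^ 2 :=
    avg_mono fun x => mul_le_mul_of_nonneg_right (hGN x) (sq_nonneg _)
  have hGD0 : 0 ≤ avg fun x => G x * (a x - b x) ^ 2 :=
    avg_nonneg fun x => mul_nonneg (hG0 x) (sq_nonneg _)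
  have hGle : avg G ≤ 2 := (avg_mono hGN).trans hN
  refine abs_le_of_sq_le_sq ?_ hκ0
  nlinarith [mul_le_mul_of_nonneg_right hGle hGD0]

end Counting

/-- The counting lemma when the two weighted hypergraphs differ on at most `m` edges, by induction
on `m`. -/
lemma counting_aux (J : Type) [Fintype J] [DecidableEq J] (m : ℕ) : ∀ γ : ℝ, 0 < γ →
    ∃ ε : ℝ, 0 < ε ∧ ∃ η : ℝ, 0 < η ∧
    ∀ (V : J → Type) [∀ j, Fintype (V j)] [∀ j, Nonempty (V j)]
      (r : ℕ) (H S : Finset (Finset J)), (∀ e ∈ H, e.card = r) → S.card ≤ m →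
      ∀ ν g g' : Finset J → ((j : J) → V j) → ℝ,
      (∀ e ∈ H, Dep e (ν e)) → (∀ e ∈ H, Dep e (g e)) → (∀ e ∈ H, Dep e (g' e)) →
      LF H ν η →
      (∀ e ∈ H, ∀ x, 0 ≤ g e x ∧ g e x ≤ ν e x) →
      (∀ e ∈ H, ∀ x, 0 ≤ g' e x ∧ g' e x ≤ 1) →
      (∀ e ∈ H, Disc e (fun x => g e x - g' e x) ε) →
      (∀ e ∈ H, e ∉ S → g e = g' e) →
      |(avg fun x => ∏ e ∈ H, g e x) - avg fun x => ∏ e ∈ H, g' e x| ≤ γ := by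
  induction m with
  | zero =>
    intro γ hγ
    refine ⟨1, one_pos, 1, one_pos, ?_⟩
    intro V _ _ r H S _ hS ν g g' _ _ _ _ _ _ _ heq
    have hS0 : S = ∅ := Finset.card_eq_zero.mp (Nat.le_zero.mp hS)
    have : ∀ x, ∏ e ∈ H, g e x = ∏ e ∈ H, g' e x := fun x =>
      Finset.prod_congr rfl fun e he => by rw [heq e he (by simp [hS0])]
    simp only [this, sub_self, abs_zero]
    exact hγ.le
  | succ m ih =>
    intro γ hγ
    -- `κ` bounds the square of the error allowed for the sparse part; `δ`, `θ` and the error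
    -- `κ / 32` of the induction hypothesis are shares of it.
    set κ : ℝ := min 1 ((γ / 2) ^ 2) with hκdef
    have hκ : 0 < κ := lt_min one_pos (by positivity)
    have hκ1 : κ ≤ 1 := min_le_left _ _
    obtain ⟨ε', hε', η', hη', hind⟩ := ih (κ / 32) (by positivity)
    set n := Fintype.card J
    set δ : ℝ := κ / 64 with hδ
    set θ : ℝ := κ / 16 with hθdef
    have hδ0 : 0 < δ := by positivity
    have hθ : 0 < θ := by positivity
    set η₁ : ℝ := (δ / 2) ^ 2 ^ n / 2 ^ 2 ^ n with hη₁
    set η₂ : ℝ := κ / 64 / (1 + 1 / θ) with hη₂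
    have hη₁0 : 0 < η₁ := by positivity
    have hη₂0 : 0 < η₂ := by positivity
    refine ⟨min ε' (γ / 2), lt_min hε' (by positivity), min (min η' 1) (min η₁ η₂),
      lt_min (lt_min hη' one_pos) (lt_min hη₁0 hη₂0), ?_⟩
    intro V _ _ r H S hr hS ν g g' hνd hgd hg'd hLF hg hg' hdisc heq
    set η := min (min η' 1) (min η₁ η₂) with hη
    have hηη' : η ≤ η' := (min_le_left _ _).trans (min_le_left _ _)
    have hη1 : η ≤ 1 := (min_le_left _ _).trans (min_le_right _ _)
    have hηη₁ : η ≤ η₁ := (min_le_right _ _).trans (min_le_left _ _)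
    have hηη₂ : η ≤ η₂ := (min_le_right _ _).trans (min_le_right _ _)
    by_cases hS1 : ∀ e ∈ H, e ∉ S
    · have : ∀ x, ∏ e ∈ H, g e x = ∏ e ∈ H, g' e x := fun x =>
        Finset.prod_congr rfl fun e he => by rw [heq e he (hS1 e he)]
      simp only [this, sub_self, abs_zero]
      exact hγ.le
    push Not at hS1
    obtain ⟨e₁, he₁, he₁S⟩ := hS1
    have hg0 : ∀ e ∈ H, ∀ x, 0 ≤ g e x := fun e he x => (hg e he x).1
    have hg'0 : ∀ e ∈ H, ∀ x, 0 ≤ g' e x := fun e he x => (hg' e he x).1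
    set a := marg H e₁ g with ha
    set b := marg H e₁ g' with hb
    have hb1 : ∀ x, b x ≤ 1 := fun x => by
      have := marg_mono (e₁ := e₁) (w' := fun _ _ => 1) hg' x
      simpa [hb, marg, avg_const] using this
    -- The induction hypothesis, with the weight on `e₁` replaced in both hypergraphs by a
    -- bounded function `c`.
    have hreplace : ∀ c : ((j : J) → V j) → ℝ, Dep e₁ c → (∀ x, 0 ≤ c x ∧ c x ≤ 1) →
        |(avg fun x => c x * a x) - avg fun x => c x * b x| ≤ κ / 32 := by
      intro c hc hc01
      rw [ha, hb, avg_mul_marg H e₁ g hc, avg_mul_marg H e₁ g' hc]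
      simp only [← prod_update he₁]
      refine hind V r H (S.erase e₁) hr ?_ (Function.update ν e₁ fun _ => 1) _ _ ?_ ?_ ?_
        ((hLF.update_one he₁).mono hηη') ?_ ?_ ?_ ?_
      · rw [Finset.card_erase_of_mem he₁S]
        omega
      all_goals
        intro e he
        by_cases h1 : e = e₁
      · subst h1; rw [Function.update_self]; exact fun _ _ _ => rfl
      · simpa [h1] using hνd e he
      · subst h1; simpa using hc
      · simpa [h1] using hgd e he
      · subst h1; simpa using hc
      · simpa [h1] using hg'd e he
      · subst h1; simpa using hc01
      · simpa [h1] using hg e he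
      · subst h1; simpa using hc01
      · simpa [h1] using hg' e he
      · subst h1
        intro u _ _
        have : (avg fun _ : (j : J) → V j => (0 : ℝ)) = 0 := avg_const 0
        simpa [this] using hε'.le
      · simpa [h1] using (hdisc e he).mono (min_le_left _ _)
      · intro _
        subst h1; simp
      · intro hS'
        simpa [h1] using heq e he (fun h => hS' (Finset.mem_erase.mpr ⟨h1, h⟩))
    have hdense : |avg fun x => (g e₁ x - g' e₁ x) * b x| ≤ γ / 2 := by
      have hd : Dep e₁ (fun x => g e₁ x - g' e₁ x) := fun x y h => by
        simp only [hgd e₁ he₁ x y h, hg'd e₁ he₁ x y h]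
      rw [hb, avg_mul_marg H e₁ g' hd]
      exact Disc.orthogonal hr he₁ hd ((hdisc e₁ he₁).mono (min_le_right _ _)) hg'd hg'
    have hrn : r ≤ n := by
      rw [← hr e₁ he₁]
      exact Finset.card_le_univ _
    have hstrong : ∀ (b₀ b₁ : Bool) (w w' : Finset J → ((j : J) → V j) → ℝ),
        (∀ e ∈ H, Dep e (w e)) → (∀ e ∈ H, Dep e (w' e)) →
        (∀ e ∈ H, ∀ x, 0 ≤ w e x ∧ w e x ≤ maj ν b₀ e x) →
        (∀ e ∈ H, ∀ x, 0 ≤ w' e x ∧ w' e x ≤ maj ν b₁ e x) →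
        |avg fun x => (ν e₁ x - 1) * (marg H e₁ w x * marg H e₁ w' x)| ≤ δ := by
      intro b₀ b₁ w w' hw hw' hwb hwb'
      have hd : Dep e₁ (fun x => ν e₁ x - 1) := fun x y h => by
        simp only [hνd e₁ he₁ x y h]
      rw [avg_mul_marg_mul_marg H e₁ w w' hd]
      have h := hLF.strong hη1 hr hνd he₁ b₀ b₁ hw hw' hwb hwb'
      have h2 : (2 : ℝ) ^ 2 ^ r * η ≤ (δ / 2) ^ 2 ^ r := by
        have hp : 2 ^ r ≤ 2 ^ n := Nat.pow_le_pow_right (by norm_num) hrn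
        calc (2 : ℝ) ^ 2 ^ r * η ≤ 2 ^ 2 ^ n * η₁ := by
              apply mul_le_mul (pow_le_pow_right₀ (by norm_num) hp) hηη₁
              · exact le_min (le_min hη'.le zero_le_one) (le_min hη₁0.le hη₂0.le)
              · positivity
          _ = (δ / 2) ^ 2 ^ n := by
              rw [hη₁]
              field_simp
          _ ≤ (δ / 2) ^ 2 ^ r :=
              pow_le_pow_of_le_one (by positivity) (by rw [hδ]; linarith) hp
      have h3 := (pow_le_pow_iff_left₀ (by positivity) (by positivity) (by positivity)).mp
        (h.trans h2)
      linarith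
    have hsparse : |avg fun x => g e₁ x * (a x - b x)| ≤ γ / 2 := by
      refine sparse_bound (N := ν e₁) (n := marg H e₁ ν) (δ := δ) (θ := θ) (η := η)
        (γ' := κ / 32) hθ (hg0 e₁ he₁) (fun x => (hg e₁ he₁ x).2)
        (fun x => ⟨marg_nonneg hg0 x, marg_mono hg x⟩) (fun x => ⟨marg_nonneg hg'0 x, hb1 x⟩)
        ?_ (hLF.marg_sub_one_sq hr hνd he₁)
        (hstrong true true g g hgd hgd (by simpa [maj] using hg) (by simpa [maj] using hg))
        (hstrong true false g g' hgd hg'd (by simpa [maj] using hg) (by simpa [maj] using hg'))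
        (hstrong false false g' g' hg'd hg'd (by simpa [maj] using hg')
          (by simpa [maj] using hg'))
        (hreplace (fun x => min (a x) 1) (fun x y h => by
            simp only [ha, marg_dep H e₁ g x y h])
          fun x => ⟨le_min (marg_nonneg hg0 x) zero_le_one, min_le_right _ _⟩)
        (hreplace b (marg_dep H e₁ g') fun x => ⟨marg_nonneg hg'0 x, hb1 x⟩) ?_ (by positivity)
      · have h := hLF.special hr hνd he₁ (F := ∅) (by simp) (I := ∅) (by simp)
          (R := {∅}) (by simp) true true
        simp only [Finset.prod_singleton, mix_empty, Finset.prod_empty, mul_one, avg_const] at h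
        have := (abs_le.mp h).2
        have e : avg (ν e₁) = avg fun x => ν e₁ x := rfl
        linarith
      · have h1 : (1 + 1 / θ) * (3 * η) ≤ 3 * (κ / 64) := by
          have : (1 + 1 / θ) * η₂ = κ / 64 := by
            rw [hη₂]
            field_simp
          have h2 : (1 + 1 / θ) * η ≤ (1 + 1 / θ) * η₂ := by gcongr
          linarith
        have h3 : κ ≤ (γ / 2) ^ 2 := min_le_right _ _
        rw [hδ, hθdef]
        rw [hθdef] at h1
        linarith
    have e1 : (avg fun x => ∏ e ∈ H, g e x) = avg fun x => g e₁ x * a x := by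
      rw [ha, avg_mul_marg H e₁ g (hgd e₁ he₁)]
      congr 1; ext x
      exact (Finset.mul_prod_erase H _ he₁).symm
    have e2 : (avg fun x => ∏ e ∈ H, g' e x) = avg fun x => g' e₁ x * b x := by
      rw [hb, avg_mul_marg H e₁ g' (hg'd e₁ he₁)]
      congr 1; ext x
      exact (Finset.mul_prod_erase H _ he₁).symm
    have e3 : (avg fun x => g e₁ x * a x) - (avg fun x => g' e₁ x * b x) =
        (avg fun x => g e₁ x * (a x - b x)) + avg fun x => (g e₁ x - g' e₁ x) * b x := by
      rw [← avg_sub, ← avg_add]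
      congr 1; ext x; ring
    rw [e1, e2, e3]
    linarith [abs_add_le (avg fun x => g e₁ x * (a x - b x))
      (avg fun x => (g e₁ x - g' e₁ x) * b x)]

end RelCount

/-- **Counting lemma.** For every `γ > 0` and finite `J` there exist `ε > 0` and
`η > 0` such that: for every hypergraph system `(J, (V_j), r, H)` and weighted
hypergraphs `ν, g, g'` with `ν` satisfying the `H`-linear forms condition within `η`,
`0 ≤ g ≤ ν`, `0 ≤ g' ≤ 1`, and `(g, g')` an `ε`-discrepancy pair,
`|E[∏_{e ∈ H} g_e(x_e)] - E[∏_{e ∈ H} g'_e(x_e)]| ≤ γ`. -/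
theorem counting_lemma (γ : ℝ) (hγ : 0 < γ)
    (J : Type) [Fintype J] [DecidableEq J] :
    ∃ ε : ℝ, 0 < ε ∧ ∃ η : ℝ, 0 < η ∧
    ∀ (V : J → Type) [∀ j, Fintype (V j)] [∀ j, Nonempty (V j)]
      (r : ℕ), 1 ≤ r → ∀ H : Finset (Finset J), (∀ e ∈ H, e.card = r) →
      ∀ ν g g' : (e : Finset J) → ((i : ↥e) → V i) → ℝ,
      HLinearForms H ν η →
      (∀ e ∈ H, ∀ x, 0 ≤ g e x ∧ g e x ≤ ν e x) →
      (∀ e ∈ H, ∀ x, 0 ≤ g' e x ∧ g' e x ≤ 1) →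
      (∀ e ∈ H, EdgeDiscrepancy e (g e) (g' e) ε) →
      |avg (fun x : (j : J) → V j => ∏ e ∈ H, g e (restr e x)) -
        avg (fun x : (j : J) → V j => ∏ e ∈ H, g' e (restr e x))| ≤ γ := by
  obtain ⟨ε, hε, η, hη, h⟩ :=
    RelCount.counting_aux J (Fintype.card (Finset J)) γ hγ
  refine ⟨ε, hε, η, hη, ?_⟩
  intro V _ _ r _ H hr ν g g' hLF hg hg' hdisc
  exact h V r H H hr (Finset.card_le_univ _) (fun e x => ν e (restr e x))
    (fun e x => g e (restr e x)) (fun e x => g' e (restr e x))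
    (fun e _ => RelCount.restr_dep e _) (fun e _ => RelCount.restr_dep e _)
    (fun e _ => RelCount.restr_dep e _) (RelCount.lf_of_hLinearForms hLF)
    (fun e he x => hg e he _) (fun e he x => hg' e he _)
    (fun e he => RelCount.disc_of_edgeDiscrepancy (hdisc e he)) (fun e he h => absurd he h)
end

section
/- For every γ > 0 and every finite set J, there exist ε > 0 and η > 0 such that the following holds. Let V = (J, (V_j)_{j∈J}, r, H) be a hypergraph system and let ν, g, g̃ be weighted hypergraphs on V. Suppose ν satisfies the H-linear forms condition within η, 0 ≤ g_e ≤ ν_e and 0 ≤ g̃_e ≤ ν_e pointwise for all e ∈ H, and (g, g̃) is an ε-discrepancy pair. Then |E[∏_{e∈H} g_e(x_e) | x ∈ V_J] − E[∏_{e∈H} g̃_e(x_e) | x ∈ V_J]| ≤ γ. -/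
/-!
The difference of the two counts telescopes: exchanging `g e` for `g' e` one edge at a time,
it suffices to bound `E[∏ f e]` where one factor `f e₁ = g e₁ - g' e₁` has small discrepancy and
the others satisfy only `|f e| ≤ ν e`.

If the other factors were bounded by `1`, one would freeze the coordinates outside `e₁`; every
other edge misses a vertex of `e₁`, so its factor is a function of a face of `e₁`, and the
discrepancy hypothesis applies (`counting_bounded`). The unbounded factors are turned into
bounded ones one at a time (`densify`). Write the product as `f e₂ * φ` and let `F` be the
conditional expectation of `φ` given `x_{e₂}`. By Cauchy–Schwarz
`E[f e₂ * F]² ≤ E[ν e₂] * E[ν e₂ * F²]`. Here `ν e₂` may be replaced by `1`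
(`strong_linear_forms`), and `F` is dominated by the analogous conditional expectation of the
`ν e`, which is close to `1` in `L²` (`LinForms.cexp_close`), so that `F²` is `L¹`-close to
`F * t` with `t` the truncation of `F` to `[-1, 1]`. But `E[F * t] = E[φ * t]` is the same kind
of count with the bounded function `t` in place of `f e₂`. Since the factor at `e₁` is never
touched, induction on the number of unbounded factors (`counting_sparse`) closes the argument,
without a dense model for `g` or `g'`.

The estimate `strong_linear_forms` for `E[(ν e₂ - 1) * F²]` doubles the coordinates of `e₂` one
after another by Cauchy–Schwarz. Each other edge misses some vertex of `e₂`, and when that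
vertex is doubled the factor `f e` is replaced by `ν e`; in the end only factors `ν e` and
`ν e₂ - 1` at all vertices of the doubled `e₂` are left, and expanding the latter gives a sum
with cancelling main terms.

Functions on `V_e` are handled throughout as functions on `V_J` depending only on the
coordinates in `e` (`DependsOn`).
-/

open Finset

variable {J : Type} [Fintype J] [DecidableEq J] {V : J → Type}

/-! ### Averages -/

section Averages

variable {α β : Type*} [Fintype α] [Fintype β]

lemma avg_add (f g : α → ℝ) : avg (fun x => f x + g x) = avg f + avg g := by
  simp only [avg, Finset.sum_add_distrib, add_div]

lemma avg_sub (f g : α → ℝ) : avg (fun x => f x - g x) = avg f - avg g := by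
  simp only [avg, Finset.sum_sub_distrib, sub_div]

lemma avg_mul_left (c : ℝ) (f : α → ℝ) : avg (fun x => c * f x) = c * avg f := by
  simp only [avg, ← Finset.mul_sum, mul_div_assoc]

lemma avg_const [Nonempty α] (c : ℝ) : avg (fun _ : α => c) = c := by
  have : (Fintype.card α : ℝ) ≠ 0 := by exact_mod_cast Fintype.card_ne_zero
  simp only [avg, Finset.sum_const, Finset.card_univ, nsmul_eq_mul]
  field_simp

lemma avg_mono {f g : α → ℝ} (h : ∀ x, f x ≤ g x) : avg f ≤ avg g :=
  div_le_div_of_nonneg_right (Finset.sum_le_sum fun x _ => h x) (Nat.cast_nonneg _)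

lemma avg_nonneg {f : α → ℝ} (h : ∀ x, 0 ≤ f x) : 0 ≤ avg f :=
  div_nonneg (Finset.sum_nonneg fun x _ => h x) (Nat.cast_nonneg _)

lemma abs_avg_le (f : α → ℝ) : |avg f| ≤ avg (fun x => |f x|) := by
  rw [avg, abs_div, Nat.abs_cast]
  exact div_le_div_of_nonneg_right (Finset.abs_sum_le_sum_abs _ _) (Nat.cast_nonneg _)

lemma avg_prod (f : α × β → ℝ) : avg f = avg fun x => avg fun y => f (x, y) := by
  simp only [avg, Fintype.sum_prod_type, Fintype.card_prod, Nat.cast_mul, ← Finset.sum_div]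
  rw [div_div, mul_comm]

lemma avg_equiv (σ : α ≃ β) (f : β → ℝ) : avg (fun x => f (σ x)) = avg f := by
  simp only [avg, Equiv.sum_comp σ f, Fintype.card_congr σ]

lemma avg_prod_swap (f : α × β → ℝ) : avg f = avg fun y => avg fun x => f (x, y) := by
  rw [← avg_equiv (Equiv.prodComm β α) f, avg_prod]
  rfl

lemma avg_sum {ι : Type*} (s : Finset ι) (f : ι → α → ℝ) :
    avg (fun x => ∑ i ∈ s, f i x) = ∑ i ∈ s, avg (f i) := by
  simp only [avg, ← Finset.sum_div]
  rw [Finset.sum_comm]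

/-- Weighted Cauchy–Schwarz. -/
lemma avg_mul_sq_le {A M B : α → ℝ} (h : ∀ x, |A x| ≤ M x) :
    (avg fun x => A x * B x) ^ 2 ≤ avg M * avg fun x => M x * B x ^ 2 := by
  have hM : ∀ x, 0 ≤ M x := fun x => (abs_nonneg _).trans (h x)
  simp only [avg]
  rw [div_pow, div_mul_div_comm, ← sq]
  refine div_le_div_of_nonneg_right ?_ (by positivity)
  refine Finset.sum_sq_le_sum_mul_sum_of_sq_le_mul _ (fun x _ => hM x)
    (fun x _ => mul_nonneg (hM x) (sq_nonneg _)) fun x _ => ?_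
  have : A x ^ 2 ≤ M x ^ 2 := sq_le_sq' (abs_le.1 (h x)).1 (abs_le.1 (h x)).2
  nlinarith [mul_le_mul_of_nonneg_right this (sq_nonneg (B x))]

end Averages

/-! ### Resampling coordinates and conditional expectations -/

section Resampling

variable [∀ j, Fintype (V j)]

/-- Conditional expectation of `φ` given the coordinates in `e`, as a function on the
whole of `V_J`. -/
noncomputable def cexp (e : Finset J) (φ : ((j : J) → V j) → ℝ) (x : (j : J) → V j) : ℝ :=
  avg fun y => φ (e.piecewise x y)

lemma cexp_dependsOn (e : Finset J) (φ : ((j : J) → V j) → ℝ) :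
    DependsOn (cexp e φ) (e : Set J) := by
  intro x y h
  have : ∀ z, e.piecewise x z = e.piecewise y z := fun z => by
    ext j
    by_cases hj : j ∈ e
    · simpa [hj] using h j hj
    · simp [hj]
  simp only [cexp, this]

variable [∀ j, Nonempty (V j)]

/-- Exchanging the coordinates outside `e` between two points. -/
def swapOutside (e : Finset J) : ((j : J) → V j) × ((j : J) → V j) ≃
    ((j : J) → V j) × ((j : J) → V j) where
  toFun w := (e.piecewise w.1 w.2, e.piecewise w.2 w.1)
  invFun w := (e.piecewise w.1 w.2, e.piecewise w.2 w.1)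
  left_inv w := by
    ext j <;> by_cases h : j ∈ e <;> simp [h]
  right_inv w := by
    ext j <;> by_cases h : j ∈ e <;> simp [h]

lemma avg_resample (e : Finset J) (f : ((j : J) → V j) → ℝ) :
    (avg fun x => avg fun y => f (e.piecewise x y)) = avg f := by
  have h1 := avg_prod fun w : ((j : J) → V j) × ((j : J) → V j) => f (e.piecewise w.1 w.2)
  have h2 := avg_equiv (swapOutside (V := V) e) fun w => f w.1
  rw [← h1]
  refine h2.trans ?_
  rw [avg_prod]
  simp only [avg_const]

lemma avg_resample' (e : Finset J) (f : ((j : J) → V j) → ℝ) :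
    (avg fun y => avg fun x => f (e.piecewise x y)) = avg f := by
  rw [← avg_resample e f, ← avg_prod_swap (fun w : ((j : J) → V j) × ((j : J) → V j) =>
    f (e.piecewise w.1 w.2)), avg_prod]

lemma avg_restr (e : Finset J) (f : ((i : ↥e) → V i) → ℝ) :
    avg (fun x : (j : J) → V j => f (restr e x)) = avg f := by
  have h := avg_equiv (Equiv.piEquivPiSubtypeProd (· ∈ e) V) fun w => f w.1
  refine Eq.trans ?_ (h.trans ?_)
  · rfl
  · rw [avg_prod]
    simp only [avg_const]

lemma avg_mul_cexp {e : Finset J} {G : ((j : J) → V j) → ℝ} (hG : DependsOn G (e : Set J))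
    (φ : ((j : J) → V j) → ℝ) :
    (avg fun x => G x * cexp e φ x) = avg fun x => G x * φ x := by
  rw [← avg_resample e fun x => G x * φ x]
  refine congrArg avg (funext fun x => ?_)
  simp only [cexp, ← avg_mul_left]
  refine congrArg avg (funext fun y => ?_)
  rw [hG (x := x) (y := e.piecewise x y) fun i hi => by simp [Finset.mem_coe.1 hi]]

lemma avg_mul_cexp_sq {e : Finset J} {G : ((j : J) → V j) → ℝ}
    (hG : DependsOn G (e : Set J)) (φ : ((j : J) → V j) → ℝ) :
    (avg fun x => G x * cexp e φ x ^ 2) =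
      avg fun w : ((j : J) → V j) × ((j : J) → V j) =>
        G w.1 * (φ w.1 * φ (e.piecewise w.1 w.2)) := by
  have h1 : DependsOn (fun x => G x * cexp e φ x) (e : Set J) := fun x y h => by
    simp only [hG h, cexp_dependsOn e φ h]
  have h2 := avg_mul_cexp h1 φ
  rw [avg_prod]
  simp only [sq, ← mul_assoc]
  rw [h2]
  refine congrArg avg (funext fun x => ?_)
  simp only [avg_mul_left, cexp]
  ring


/-- One Cauchy–Schwarz step: the coordinate `j` is doubled. The factor `A`, which does not
involve `j`, is replaced by its majorant `M`, and `B` by `B` times its copy in the new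
value of the `j`-th coordinate. -/
lemma cauchy_schwarz_step (j : J) {A M B : ((j : J) → V j) → ((j : J) → V j) → ℝ}
    (hAM : ∀ p q, |A p q| ≤ M p q)
    (hA : ∀ p q r, A (({j} : Finset J).piecewise r p) q = A p q)
    (hM : ∀ p q r, M (({j} : Finset J).piecewise r p) q = M p q)
    (hM' : ∀ p q r, M p (({j} : Finset J).piecewise r q) = M p q)
    (hB : ∀ p q r, B p (({j} : Finset J).piecewise r q) = B p q) :
    (avg fun w : ((j : J) → V j) × ((j : J) → V j) => A w.1 w.2 * B w.1 w.2) ^ 2 ≤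
      (avg fun w : ((j : J) → V j) × ((j : J) → V j) => M w.1 w.2) *
      avg fun w : ((j : J) → V j) × ((j : J) → V j) => M w.1 w.2 *
        (B w.1 w.2 * B (({j} : Finset J).piecewise w.2 w.1) w.2) := by
  set s : Finset J := {j}
  have hpp : ∀ r r' p : (j : J) → V j,
      s.piecewise r (s.piecewise r' p) = s.piecewise r p := fun r r' p => by
    ext i; by_cases hi : i ∈ s <;> simp [hi]
  -- `C` averages `B` over its `j`-th coordinate
  let C : ((j : J) → V j) → ((j : J) → V j) → ℝ := fun p q => avg fun r => B (s.piecewise r p) q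
  have hC : ∀ p q r, C (s.piecewise r p) q = C p q := fun p q r => by simp only [C, hpp]
  have key : ∀ G : ((j : J) → V j) → ((j : J) → V j) → ℝ,
      (∀ p q r, G (s.piecewise r p) q = G p q) →
      (avg fun w : ((j : J) → V j) × ((j : J) → V j) => G w.1 w.2 * B w.1 w.2) =
      avg fun w : ((j : J) → V j) × ((j : J) → V j) => G w.1 w.2 * C w.1 w.2 := by
    intro G hG
    rw [avg_prod_swap, avg_prod_swap]
    congr! 2 with q
    rw [← avg_resample' s]
    simp only [hG, C, avg_mul_left]
  rw [key A hA]
  refine (avg_mul_sq_le (A := fun w : ((j : J) → V j) × ((j : J) → V j) => A w.1 w.2)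
    (M := fun w => M w.1 w.2) (B := fun w => C w.1 w.2)
    (fun w => hAM w.1 w.2)).trans (le_of_eq ?_)
  congr 1
  have h1 := key (fun p q => M p q * C p q) (fun p q r => by simp only [hM, hC])
  simp only [sq, ← mul_assoc]
  rw [← h1, avg_prod, avg_prod]
  congr! 2 with p
  rw [← avg_resample' s fun q => M p q * B p q * B (s.piecewise q p) q]
  have hs : ∀ r q : (j : J) → V j, s.piecewise (s.piecewise r q) p = s.piecewise r p :=
    fun r q => by ext i; by_cases hi : i ∈ s <;> simp [hi]
  simp only [hM', hB, hs, C, avg_mul_left]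
  congr! 2 with q
  ring

end Resampling

/-! ### Strong linear forms -/

section StrongLinearForms

/-- The subsets `S ⊆ e` (recording which coordinates of `x_e` are taken from the second
copy of `V_J`) with `S ∩ e₀ ⊆ D` which, outside `e₀`, are either empty or everything. -/
def fam {J : Type} [DecidableEq J] (e₀ D e : Finset J) : Finset (Finset J) :=
  e.powerset.filter fun S => S ∩ e₀ ⊆ D ∧ (S \ e₀ = ∅ ∨ S \ e₀ = e \ e₀)

lemma fam_insert_of_notMem {J : Type} [DecidableEq J] {e₀ D e : Finset J} {j : J}
    (hj : j ∉ e) :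
    fam e₀ (insert j D) e = fam e₀ D e := by
  refine Finset.filter_congr fun S hS => ?_
  have : j ∉ S := fun h => hj (Finset.mem_powerset.1 hS h)
  have h2 : j ∉ S ∩ e₀ := fun h => this (Finset.mem_inter.1 h).1
  rw [Finset.subset_insert_iff_of_notMem h2]

lemma notMem_of_mem_fam {J : Type} [DecidableEq J] {e₀ D e S : Finset J} {j : J}
    (hj₀ : j ∈ e₀) (hjD : j ∉ D) (hS : S ∈ fam e₀ D e) : j ∉ S := fun h =>
  hjD ((Finset.mem_filter.1 hS).2.1 (Finset.mem_inter.2 ⟨h, hj₀⟩))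

lemma fam_insert_of_mem {J : Type} [DecidableEq J] {e₀ D e : Finset J} {j : J}
    (hj : j ∈ e) (hj₀ : j ∈ e₀) (hjD : j ∉ D) :
    fam e₀ (insert j D) e = fam e₀ D e ∪ (fam e₀ D e).image (insert j) := by
  ext S
  simp only [Finset.mem_union, Finset.mem_image]
  constructor
  · intro hS
    simp only [fam, Finset.mem_filter, Finset.mem_powerset] at hS ⊢
    obtain ⟨h1, h2, h3⟩ := hS
    by_cases hjS : j ∈ S
    · right
      refine ⟨S.erase j, ⟨(Finset.erase_subset _ _).trans h1, ?_, ?_⟩, Finset.insert_erase hjS⟩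
      · intro i hi
        simp only [Finset.mem_inter, Finset.mem_erase] at hi
        exact Finset.mem_of_mem_insert_of_ne (h2 (Finset.mem_inter.2 ⟨hi.1.2, hi.2⟩)) hi.1.1
      · have : S.erase j \ e₀ = S \ e₀ := by
          ext i; simp only [Finset.mem_sdiff, Finset.mem_erase]
          constructor
          · tauto
          · rintro ⟨a, b⟩; exact ⟨⟨fun h => b (h ▸ hj₀), a⟩, b⟩
        rwa [this]
    · left
      refine ⟨h1, fun i hi => Finset.mem_of_mem_insert_of_ne (h2 hi) ?_, h3⟩
      rintro rfl
      exact hjS (Finset.mem_inter.1 hi).1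
  · rintro (hS | ⟨T, hT, rfl⟩)
    · simp only [fam, Finset.mem_filter, Finset.mem_powerset] at hS ⊢
      exact ⟨hS.1, hS.2.1.trans (Finset.subset_insert _ _), hS.2.2⟩
    · simp only [fam, Finset.mem_filter, Finset.mem_powerset] at hT ⊢
      refine ⟨Finset.insert_subset hj hT.1, ?_, ?_⟩
      · rw [Finset.insert_inter_of_mem hj₀]
        exact Finset.insert_subset_insert _ hT.2.1
      · rw [Finset.insert_sdiff_of_mem _ hj₀]
        exact hT.2.2

lemma prod_fam_insert {J : Type} [DecidableEq J] {e₀ D e : Finset J} {j : J}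
    (hj : j ∈ e) (hj₀ : j ∈ e₀) (hjD : j ∉ D) (F : Finset J → ℝ) :
    ∏ S ∈ fam e₀ (insert j D) e, F S =
      (∏ S ∈ fam e₀ D e, F S) * ∏ S ∈ fam e₀ D e, F (insert j S) := by
  rw [fam_insert_of_mem hj hj₀ hjD, Finset.prod_union, Finset.prod_image]
  · intro S hS T hT h
    rw [← Finset.erase_insert (notMem_of_mem_fam hj₀ hjD hS),
      ← Finset.erase_insert (notMem_of_mem_fam hj₀ hjD hT), h]
  · rw [Finset.disjoint_right]
    intro S hS hS'
    obtain ⟨T, -, rfl⟩ := Finset.mem_image.1 hS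
    exact notMem_of_mem_fam hj₀ hjD hS' (Finset.mem_insert_self _ _)

lemma fam_self {J : Type} [DecidableEq J] (e₀ : Finset J) : fam e₀ e₀ e₀ = e₀.powerset := by
  refine Finset.filter_true_of_mem fun S hS => ⟨Finset.inter_subset_right, Or.inl ?_⟩
  exact Finset.sdiff_eq_empty_iff_subset.2 (Finset.mem_powerset.1 hS)

lemma fam_empty {J : Type} [DecidableEq J] (e₀ e : Finset J) : fam e₀ ∅ e = {∅, e \ e₀} := by
  ext S
  simp only [fam, Finset.mem_filter, Finset.mem_powerset, Finset.mem_insert,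
    Finset.mem_singleton, Finset.subset_empty]
  constructor
  · rintro ⟨-, h1, h2⟩
    have : S \ e₀ = S := Finset.sdiff_eq_self_of_disjoint (Finset.disjoint_iff_inter_eq_empty.2 h1)
    rwa [this] at h2
  · rintro (rfl | rfl)
    · simp
    · refine ⟨Finset.sdiff_subset, Finset.sdiff_inter_self _ _, Or.inr ?_⟩
      simp

variable [∀ j, Fintype (V j)]

/-- The `H`-linear forms condition within `η` for functions `N e` on the whole of `V_J`
(in applications `N e x` depends only on `x_e`). The exponents are encoded by the family
`Ω e` of those `S ⊆ e` for which the factor evaluated at the point with coordinates in `S`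
from the second copy of `V_J`, and the others from the first one, is present. -/
def LinForms (H : Finset (Finset J)) (N : Finset J → ((j : J) → V j) → ℝ) (η : ℝ) : Prop :=
  ∀ Ω : Finset J → Finset (Finset J), (∀ e ∈ H, ∀ S ∈ Ω e, S ⊆ e) →
    |avg (fun w : ((j : J) → V j) × ((j : J) → V j) =>
      ∏ e ∈ H, ∏ S ∈ Ω e, N e (S.piecewise w.2 w.1)) - 1| ≤ η

/-- The integrand after the coordinates in `D` have been doubled by Cauchy–Schwarz. A
function `f e` has been replaced by its majorant `N e` once some coordinate outside `e` has
been doubled. -/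
noncomputable def stage (H : Finset (Finset J)) (f N : Finset J → ((j : J) → V j) → ℝ)
    (e₀ D : Finset J) (p q : (j : J) → V j) : ℝ :=
  ∏ e ∈ H, ∏ S ∈ fam e₀ D e, (if D ⊆ e then f e else N e) (S.piecewise q p)

lemma stage_step [∀ j, Nonempty (V j)]
    {H : Finset (Finset J)} {f N : Finset J → ((j : J) → V j) → ℝ} {η : ℝ}
    (hN : LinForms H N η) (hη : η ≤ 1) {e₀ D : Finset J} {j : J} (hj₀ : j ∈ e₀) (hjD : j ∉ D)
    (hNd : ∀ e ∈ H, DependsOn (N e) (e : Set J)) (hfd : ∀ e ∈ H, DependsOn (f e) (e : Set J))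
    (hN0 : ∀ e ∈ H, ∀ x, 0 ≤ N e x) (hf : ∀ e ∈ H, e ≠ e₀ → ∀ x, |f e x| ≤ N e x) :
    (avg fun w : ((j : J) → V j) × ((j : J) → V j) => stage H f N e₀ D w.1 w.2) ^ 2 ≤
      2 * |avg fun w : ((j : J) → V j) × ((j : J) → V j) =>
        stage H f N e₀ (insert j D) w.1 w.2| := by
  let k : Finset J → ((j : J) → V j) → ℝ := fun e => if D ⊆ e then f e else N e
  have hkd : ∀ e ∈ H, DependsOn (k e) (e : Set J) := fun e he => by
    by_cases h : D ⊆ e <;> simp only [k, h, if_true, if_false]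
    exacts [hfd e he, hNd e he]
  let A : ((j : J) → V j) → ((j : J) → V j) → ℝ := fun p q =>
    ∏ e ∈ H with j ∉ e, ∏ S ∈ fam e₀ D e, k e (S.piecewise q p)
  let M : ((j : J) → V j) → ((j : J) → V j) → ℝ := fun p q =>
    ∏ e ∈ H with j ∉ e, ∏ S ∈ fam e₀ D e, N e (S.piecewise q p)
  let B : ((j : J) → V j) → ((j : J) → V j) → ℝ := fun p q =>
    ∏ e ∈ H with j ∈ e, ∏ S ∈ fam e₀ D e, k e (S.piecewise q p)
  have hfree : ∀ (h : ((j : J) → V j) → ℝ) (e S : Finset J), DependsOn h (e : Set J) → j ∉ e →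
      ∀ p q r, h (S.piecewise q (({j} : Finset J).piecewise r p)) = h (S.piecewise q p) ∧
        h (S.piecewise (({j} : Finset J).piecewise r q) p) = h (S.piecewise q p) := by
    intro h e S hd hje p q r
    constructor <;>
    · refine hd fun i hi => ?_
      have : i ≠ j := fun h => hje (h ▸ hi)
      by_cases hiS : i ∈ S <;> simp [hiS, this]
  have hcs := cauchy_schwarz_step j (A := A) (M := M) (B := B) ?_ ?_ ?_ ?_ ?_
  · have e1 : ∀ p q, A p q * B p q = stage H f N e₀ D p q := fun p q => by
      simp only [A, B, stage, k]
      rw [mul_comm, Finset.prod_filter_mul_prod_filter_not]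
    have e2 : ∀ p q, M p q * (B p q * B (({j} : Finset J).piecewise q p) q) =
        stage H f N e₀ (insert j D) p q := fun p q => by
      simp only [stage]
      rw [← Finset.prod_filter_mul_prod_filter_not H (fun e => j ∈ e), mul_comm]
      simp only [B, ← Finset.prod_mul_distrib]
      congr 1
      · refine Finset.prod_congr rfl fun e he => ?_
        have hje := (Finset.mem_filter.1 he).2
        rw [prod_fam_insert hje hj₀ hjD, ← Finset.prod_mul_distrib]
        refine Finset.prod_congr rfl fun S hS => ?_
        have hjS := notMem_of_mem_fam hj₀ hjD hS
        have : S.piecewise q (({j} : Finset J).piecewise q p) = (insert j S).piecewise q p := by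
          ext i
          by_cases hiS : i ∈ S
          · simp [hiS]
          · by_cases hij : i = j
            · subst hij; simp [hiS]
            · simp [hiS, hij]
        have h2 : insert j D ⊆ e ↔ D ⊆ e := by
          rw [Finset.insert_subset_iff]; simp [hje]
        simp only [k, this, h2]
      · refine Finset.prod_congr rfl fun e he => ?_
        have hje := (Finset.mem_filter.1 he).2
        have h2 : ¬ insert j D ⊆ e := fun h => hje (h (Finset.mem_insert_self _ _))
        rw [fam_insert_of_notMem hje]
        simp only [h2, if_false]
    simp only [e1, e2] at hcs
    refine hcs.trans ((mul_le_mul_of_nonneg_left (le_abs_self _) ?_).trans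
      (mul_le_mul_of_nonneg_right ?_ (abs_nonneg _)))
    · refine avg_nonneg fun w => Finset.prod_nonneg fun e he => Finset.prod_nonneg fun S _ => ?_
      exact hN0 e (Finset.mem_filter.1 he).1 _
    · have := hN (fun e => if j ∉ e then fam e₀ D e else ∅) ?_
      · have e3 : ∀ p q, M p q = ∏ e ∈ H, ∏ S ∈ (if j ∉ e then fam e₀ D e else ∅),
            N e (S.piecewise q p) := fun p q => by
          simp only [M, Finset.prod_filter]
          refine Finset.prod_congr rfl fun e he => ?_
          by_cases h : j ∈ e <;> simp [h]
        simp only [← e3] at this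
        linarith [(abs_le.1 this).2]
      · intro e he S hS
        by_cases h : j ∈ e <;> simp only [h, not_true, not_false_iff, if_true, if_false] at hS
        · simp at hS
        · exact Finset.mem_powerset.1 (Finset.mem_filter.1 hS).1
  · intro p q
    simp only [A, M, Finset.abs_prod]
    refine Finset.prod_le_prod (fun _ _ => Finset.prod_nonneg fun _ _ => abs_nonneg _)
      fun e he => Finset.prod_le_prod (fun _ _ => abs_nonneg _) fun S _ => ?_
    obtain ⟨heH, hje⟩ := Finset.mem_filter.1 he
    by_cases h : D ⊆ e <;> simp only [k, h, if_true, if_false]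
    · exact hf e heH (fun h' => hje (h' ▸ hj₀)) _
    · rw [abs_of_nonneg (hN0 e heH _)]
  · intro p q r
    refine Finset.prod_congr rfl fun e he => Finset.prod_congr rfl fun S _ => ?_
    obtain ⟨heH, hje⟩ := Finset.mem_filter.1 he
    exact (hfree _ e S (hkd e heH) hje p q r).1
  · intro p q r
    refine Finset.prod_congr rfl fun e he => Finset.prod_congr rfl fun S _ => ?_
    obtain ⟨heH, hje⟩ := Finset.mem_filter.1 he
    exact (hfree _ e S (hNd e heH) hje p q r).1
  · intro p q r
    refine Finset.prod_congr rfl fun e he => Finset.prod_congr rfl fun S _ => ?_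
    obtain ⟨heH, hje⟩ := Finset.mem_filter.1 he
    exact (hfree _ e S (hNd e heH) hje p q r).2
  · intro p q r
    refine Finset.prod_congr rfl fun e he => Finset.prod_congr rfl fun S hS => ?_
    have hjS := notMem_of_mem_fam hj₀ hjD hS
    congr 1
    ext i
    by_cases hiS : i ∈ S
    · have : i ≠ j := fun h => hjS (h ▸ hiS)
      simp [hiS, this]
    · simp [hiS]

/-- Once all coordinates of `e₀` are doubled, every factor is a majorant, except that
`N e₀ - 1` occurs at all `2 ^ |e₀|` vertices; expanding, the main terms cancel. -/
lemma stage_final {H : Finset (Finset J)} {f N : Finset J → ((j : J) → V j) → ℝ} {η : ℝ}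
    (hN : LinForms H N η) {e₀ : Finset J} (he₀ : e₀ ∈ H)
    (hH : ∀ e ∈ H, e ≠ e₀ → ¬ e₀ ⊆ e) (hf : ∀ x, f e₀ x = N e₀ x - 1) :
    |avg fun w : ((j : J) → V j) × ((j : J) → V j) => stage H f N e₀ e₀ w.1 w.2| ≤
      2 ^ 2 ^ e₀.card * η := by
  let Ω : Finset (Finset J) → Finset J → Finset (Finset J) := fun t e =>
    if e = e₀ then e₀.powerset \ t else fam e₀ e₀ e
  have expand : ∀ p q, stage H f N e₀ e₀ p q = ∑ t ∈ e₀.powerset.powerset,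
      (-1) ^ t.card * ∏ e ∈ H, ∏ S ∈ Ω t e, N e (S.piecewise q p) := fun p q => by
    rw [stage, ← Finset.mul_prod_erase H _ he₀, fam_self]
    simp only [Finset.Subset.refl, if_true, hf]
    rw [Finset.prod_sub, Finset.sum_mul]
    refine Finset.sum_congr rfl fun t _ => ?_
    rw [← Finset.mul_prod_erase H _ he₀]
    simp only [Finset.prod_const_one, mul_one, mul_assoc]
    congr 2
    · simp only [Ω, if_true]
    · refine Finset.prod_congr rfl fun e he => ?_
      obtain ⟨hne, heH⟩ := Finset.mem_erase.1 he
      simp only [Ω, hH e heH hne, hne, if_false]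
  have hcancel : ∑ t ∈ e₀.powerset.powerset, (-1 : ℝ) ^ t.card = 0 := by
    have := Finset.prod_sub (fun _ : Finset J => (1 : ℝ)) (fun _ => 1) e₀.powerset
    simp only [sub_self, Finset.prod_const_one, mul_one] at this
    rw [← this, Finset.prod_const, Finset.card_powerset, zero_pow (by positivity)]
  simp only [expand]
  rw [avg_sum]
  simp only [avg_mul_left]
  rw [← sub_zero (∑ t ∈ _, _), ← hcancel, ← Finset.sum_sub_distrib]
  refine (Finset.abs_sum_le_sum_abs _ _).trans ?_
  refine (Finset.sum_le_card_nsmul _ _ η fun t _ => ?_).trans (le_of_eq ?_)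
  · rw [← mul_sub_one, abs_mul, abs_pow, abs_neg, abs_one, one_pow, one_mul]
    refine hN (Ω t) fun e he S hS => ?_
    by_cases h : e = e₀ <;> simp only [Ω, h, if_true, if_false] at hS
    · exact h ▸ Finset.mem_powerset.1 (Finset.mem_sdiff.1 hS).1
    · exact Finset.mem_powerset.1 (Finset.mem_filter.1 hS).1
  · simp [Finset.card_powerset]

/-- Strong linear forms: `N e₀ - 1` is nearly orthogonal to the square of the conditional
expectation, given `x_{e₀}`, of a product of functions dominated by the other `N e`. -/
lemma strong_linear_forms [∀ j, Nonempty (V j)]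
    {H : Finset (Finset J)} {f N : Finset J → ((j : J) → V j) → ℝ} {η : ℝ}
    (hN : LinForms H N η) (hη : η ≤ 1) {e₀ : Finset J} (he₀ : e₀ ∈ H)
    (hH : ∀ e ∈ H, e ≠ e₀ → ¬ e₀ ⊆ e) (hH' : ∀ e ∈ H, e ≠ e₀ → ¬ e ⊆ e₀)
    (hNd : ∀ e ∈ H, DependsOn (N e) (e : Set J)) (hfd : ∀ e ∈ H, DependsOn (f e) (e : Set J))
    (hN0 : ∀ e ∈ H, ∀ x, 0 ≤ N e x) (hf : ∀ e ∈ H, e ≠ e₀ → ∀ x, |f e x| ≤ N e x) :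
    (|avg fun x => (N e₀ x - 1) * cexp e₀ (fun x => ∏ e ∈ H.erase e₀, f e x) x ^ 2| / 2) ^
      2 ^ e₀.card ≤ 2 ^ 2 ^ e₀.card * η := by
  -- the function at `e₀` is taken to be `N e₀ - 1`
  let f' : Finset J → ((j : J) → V j) → ℝ := Function.update f e₀ fun x => N e₀ x - 1
  have hne : ∀ e, e ≠ e₀ → f' e = f e := fun e h => Function.update_of_ne h _ _
  have heq : f' e₀ = fun x => N e₀ x - 1 := Function.update_self _ _ _
  have hd1 : DependsOn (fun x => N e₀ x - 1) (e₀ : Set J) := fun x y h => by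
    simp only [hNd e₀ he₀ h]
  have h0 : (avg fun x => (N e₀ x - 1) * cexp e₀ (fun x => ∏ e ∈ H.erase e₀, f e x) x ^ 2) =
      avg fun w : ((j : J) → V j) × ((j : J) → V j) => stage H f' N e₀ ∅ w.1 w.2 := by
    rw [avg_mul_cexp_sq hd1]
    refine congrArg avg (funext fun w => ?_)
    rw [stage, ← Finset.mul_prod_erase H _ he₀, fam_empty, ← Finset.prod_mul_distrib]
    simp only [Finset.empty_subset, if_true]
    congr 1
    · simp [heq]
    · refine Finset.prod_congr rfl fun e he => ?_
      obtain ⟨hee, heH⟩ := Finset.mem_erase.1 he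
      rw [fam_empty, Finset.prod_pair, hne e hee, Finset.piecewise_empty]
      · congr 1
        refine hfd e heH fun i hi => ?_
        by_cases h : i ∈ e₀
        · simp [h]
        · simp [h, Finset.mem_coe.1 hi]
      · intro h
        exact hH' e heH hee (Finset.sdiff_eq_empty_iff_subset.1 h.symm)
  have hfd' : ∀ e ∈ H, DependsOn (f' e) (e : Set J) := fun e he => by
    by_cases h : e = e₀
    · subst h; rw [heq]; exact hd1
    · rw [hne e h]; exact hfd e he
  have hind : ∀ D : Finset J, D ⊆ e₀ →
      (|avg fun w : ((j : J) → V j) × ((j : J) → V j) => stage H f' N e₀ ∅ w.1 w.2| / 2) ^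
        2 ^ D.card ≤
      |avg fun w : ((j : J) → V j) × ((j : J) → V j) => stage H f' N e₀ D w.1 w.2| / 2 := by
    intro D
    induction D using Finset.induction_on with
    | empty => intro _; simp
    | insert j D hj ih =>
      intro hD
      obtain ⟨hj₀, hD⟩ := Finset.insert_subset_iff.1 hD
      have hs := stage_step (f := f') hN hη hj₀ hj hNd hfd' hN0
        fun e he h => by rw [hne e h]; exact hf e he h
      rw [Finset.card_insert_of_notMem hj, pow_succ, pow_mul]
      refine (pow_le_pow_left₀ (by positivity) (ih hD) 2).trans ?_
      rw [div_pow, sq_abs]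
      linarith
  have hfin := stage_final (f := f') hN he₀ hH fun x => by rw [heq]
  rw [h0]
  refine (hind e₀ (Finset.Subset.refl _)).trans (le_trans ?_ hfin)
  linarith [abs_nonneg (avg fun w : ((j : J) → V j) × ((j : J) → V j) =>
    stage H f' N e₀ e₀ w.1 w.2)]

end StrongLinearForms

/-! ### Discrepancy against bounded functions of the faces -/

section Discrepancy

variable [∀ j, Fintype (V j)]

/-- `F` has correlation at most `ε` with every product of `[-1, 1]`-valued functions of the
faces of `e`. -/
def SmallDisc (e : Finset J) (F : ((j : J) → V j) → ℝ) (ε : ℝ) : Prop :=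
  ∀ b : J → ((j : J) → V j) → ℝ, (∀ j ∈ e, ∀ x, |b j x| ≤ 1) →
    (∀ j ∈ e, DependsOn (b j) (e.erase j : Set J)) →
    |avg fun x => F x * ∏ j ∈ e, b j x| ≤ ε

variable [∀ j, Nonempty (V j)]

/-- Passing from sets to `[-1, 1]`-valued functions, one face at a time: by linearity the
extreme case for a single face is the sign of a conditional expectation, which is the
difference of two indicator functions. -/
lemma smallDisc_of_edgeDiscrepancy {e : Finset J} {g g' : ((i : ↥e) → V i) → ℝ} {ε : ℝ}
    (h : EdgeDiscrepancy e g g' ε) :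
    SmallDisc e (fun x : (j : J) → V j => g (restr e x) - g' (restr e x)) (2 ^ e.card * ε) := by
  classical
  set F : ((j : J) → V j) → ℝ := fun x => g (restr e x) - g' (restr e x) with hF
  suffices H : ∀ D : Finset J, D ⊆ e → ∀ b : J → ((j : J) → V j) → ℝ,
      (∀ j ∈ e, ∀ x, |b j x| ≤ 1) → (∀ j ∈ e, DependsOn (b j) (e.erase j : Set J)) →
      (∀ j ∈ e, j ∉ D → ∀ x, b j x = 0 ∨ b j x = 1) →
      |avg fun x => F x * ∏ j ∈ e, b j x| ≤ 2 ^ D.card * ε from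
    fun b hb hd => H e (Finset.Subset.refl _) b hb hd fun j hj hj' => absurd hj hj'
  intro D
  induction D using Finset.induction_on with
  | empty =>
    intro _ b _ hd h01
    let Bs : (j : J) → Set ((i : ↥(e.erase j)) → V i) := fun j =>
      {z | ∃ x, restr (e.erase j) x = z ∧ b j x = 1}
    have key : ∀ x, F x * ∏ j ∈ e, b j x =
        (fun z => (g z - g' z) * faceInd e Bs z) (restr e x) := fun x => by
      simp only [hF, faceInd]
      congr 1
      refine Finset.prod_congr rfl fun j hj => ?_
      by_cases hx : b j x = 1
      · rw [Set.indicator_of_mem, hx]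
        exact ⟨x, rfl, hx⟩
      · rw [Set.indicator_of_notMem, (h01 j hj (Finset.notMem_empty _) x).resolve_right hx]
        rintro ⟨y, hy, hy1⟩
        refine hx (Eq.trans (hd j hj fun i hi => ?_) hy1)
        exact (congrFun hy ⟨i, hi⟩).symm
    simp only [key]
    rw [avg_restr e (fun z => (g z - g' z) * faceInd e Bs z)]
    simpa using h Bs
  | insert j D hjD ih =>
    intro hD b hb hd h01
    obtain ⟨hj, hD⟩ := Finset.insert_subset_iff.1 hD
    let R : ((j : J) → V j) → ℝ := fun x => F x * ∏ i ∈ e.erase j, b i x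
    let C := cexp (e.erase j) R
    have hCd : DependsOn C (e.erase j : Set J) := by
      simpa [C] using cexp_dependsOn (e.erase j) R
    have hproj : ∀ G : ((j : J) → V j) → ℝ, DependsOn G (e.erase j : Set J) →
        (avg fun x => G x * C x) = avg fun x => F x * ∏ i ∈ e, Function.update b j G i x := by
      intro G hG
      have h2 := avg_mul_cexp (e := e.erase j) (by simpa using hG) R
      simp only [C]
      rw [h2]
      refine congrArg avg (funext fun x => ?_)
      rw [← Finset.mul_prod_erase e _ hj, Function.update_self]
      have : ∏ i ∈ e.erase j, Function.update b j G i x = ∏ i ∈ e.erase j, b i x :=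
        Finset.prod_congr rfl fun i hi => by
          rw [Function.update_of_ne (Finset.ne_of_mem_erase hi)]
      rw [this]
      ring
    have hind : ∀ s : Set ℝ,
        |avg fun x => s.indicator (fun _ => (1 : ℝ)) (C x) * C x| ≤ 2 ^ D.card * ε := by
      intro s
      have hsd : DependsOn (fun x => s.indicator (fun _ => (1 : ℝ)) (C x))
          (e.erase j : Set J) := fun x y hxy => by simp only [hCd hxy]
      have hs01 : ∀ c : ℝ, s.indicator (fun _ => (1 : ℝ)) c = 0 ∨
          s.indicator (fun _ => (1 : ℝ)) c = 1 := fun c => by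
        by_cases hc : c ∈ s <;> simp [hc]
      rw [hproj _ hsd]
      refine ih hD _ (fun i hi x => ?_) (fun i hi => ?_) (fun i hi hiD x => ?_)
      · by_cases hij : i = j
        · subst hij
          rw [Function.update_self]
          rcases hs01 (C x) with h | h <;> rw [h] <;> simp
        · rw [Function.update_of_ne hij]; exact hb i hi x
      · by_cases hij : i = j
        · subst hij
          rw [Function.update_self]; exact hsd
        · rw [Function.update_of_ne hij]; exact hd i hi
      · by_cases hij : i = j
        · subst hij
          rw [Function.update_self]; exact hs01 _
        · rw [Function.update_of_ne hij]
          exact h01 i hi (by simp [hij, hiD]) x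
    have h1 := hproj (b j) (hd j hj)
    rw [Function.update_eq_self] at h1
    rw [← h1]
    refine (abs_avg_le _).trans ?_
    have h2 : ∀ x, |b j x * C x| ≤ (Set.Ici (0 : ℝ)).indicator (fun _ => (1 : ℝ)) (C x) * C x -
        (Set.Iio (0 : ℝ)).indicator (fun _ => (1 : ℝ)) (C x) * C x := fun x => by
      rw [abs_mul]
      refine (mul_le_of_le_one_left (abs_nonneg _) (hb j hj x)).trans ?_
      rcases le_or_gt 0 (C x) with hc | hc
      · simp [hc, abs_of_nonneg hc, not_lt.2 hc]
      · simp [hc, abs_of_neg hc, not_le.2 hc]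
    refine (avg_mono h2).trans ?_
    rw [avg_sub, Finset.card_insert_of_notMem hjD, pow_succ]
    linarith [(abs_le.1 (hind (Set.Ici 0))).2, (abs_le.1 (hind (Set.Iio 0))).1]

end Discrepancy

/-! ### The counting argument -/

section Counting

variable [∀ j, Fintype (V j)]

lemma LinForms.update_one {H : Finset (Finset J)} {N : Finset J → ((j : J) → V j) → ℝ} {η : ℝ}
    (hN : LinForms H N η) (e₀ : Finset J) :
    LinForms H (Function.update N e₀ fun _ => 1) η := by
  intro Ω hΩ
  have := hN (fun e => if e = e₀ then ∅ else Ω e) fun e he S hS => by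
    by_cases h : e = e₀
    · simp [h] at hS
    · simp only [h, if_false] at hS; exact hΩ e he S hS
  convert this using 5 with w
  refine Finset.prod_congr rfl fun e _ => ?_
  by_cases h : e = e₀
  · subst h; simp
  · simp [h]

lemma LinForms.mono {H : Finset (Finset J)} {N : Finset J → ((j : J) → V j) → ℝ} {η η' : ℝ}
    (hN : LinForms H N η) (h : η ≤ η') : LinForms H N η' :=
  fun Ω hΩ => (hN Ω hΩ).trans h

variable [∀ j, Nonempty (V j)]

lemma LinForms.avg_single {H : Finset (Finset J)} {N : Finset J → ((j : J) → V j) → ℝ} {η : ℝ}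
    (hN : LinForms H N η) {e₀ : Finset J} (he₀ : e₀ ∈ H) : avg (N e₀) ≤ 1 + η := by
  have := hN (fun e => if e = e₀ then {∅} else ∅) fun e he S hS => by
    by_cases h : e = e₀
    · simp only [h, if_true, Finset.mem_singleton] at hS; simp [hS]
    · simp [h] at hS
  have h2 : ∀ w : ((j : J) → V j) × ((j : J) → V j), (∏ e ∈ H,
      ∏ S ∈ (if e = e₀ then {∅} else (∅ : Finset (Finset J))), N e (S.piecewise w.2 w.1)) =
      N e₀ w.1 := fun w => by
    rw [Finset.prod_eq_single_of_mem e₀ he₀ fun e _ h => by simp [h]]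
    simp
  simp only [h2] at this
  rw [avg_prod] at this
  simp only [avg_const] at this
  linarith [(abs_le.1 this).2]

/-- The conditional expectation given `x_{e₀}` of the product of the remaining majorants is
close to `1` in mean square. -/
lemma LinForms.cexp_close {H : Finset (Finset J)} {N : Finset J → ((j : J) → V j) → ℝ} {η : ℝ}
    (hN : LinForms H N η) {e₀ : Finset J}
    (hH' : ∀ e ∈ H, e ≠ e₀ → ¬ e ⊆ e₀) (hNd : ∀ e ∈ H, DependsOn (N e) (e : Set J)) :
    (avg fun x => (cexp e₀ (fun x => ∏ e ∈ H.erase e₀, N e x) x - 1) ^ 2) ≤ 3 * η := by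
  set ψ : ((j : J) → V j) → ℝ := fun x => ∏ e ∈ H.erase e₀, N e x with hψ
  have hone : DependsOn (fun _ : (j : J) → V j => (1 : ℝ)) (e₀ : Set J) := fun _ _ _ => rfl
  have h1 := avg_mul_cexp hone ψ
  have h2 := avg_mul_cexp_sq hone ψ
  simp only [one_mul] at h1 h2
  have l1 : 1 - η ≤ avg ψ := by
    have := hN (fun e => if e = e₀ then ∅ else {∅}) fun e he S hS => by
      by_cases h : e = e₀
      · simp [h] at hS
      · simp only [h, if_false, Finset.mem_singleton] at hS; simp [hS]
    have h3 : ∀ w : ((j : J) → V j) × ((j : J) → V j), (∏ e ∈ H,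
        ∏ S ∈ (if e = e₀ then (∅ : Finset (Finset J)) else {∅}), N e (S.piecewise w.2 w.1)) =
        ψ w.1 := fun w => by
      simp only [hψ]
      rw [← Finset.filter_ne' H e₀, Finset.prod_filter]
      refine Finset.prod_congr rfl fun e _ => ?_
      by_cases h : e = e₀ <;> simp [h]
    simp only [h3] at this
    rw [avg_prod] at this
    simp only [avg_const] at this
    linarith [(abs_le.1 this).1]
  have l2 : (avg fun w : ((j : J) → V j) × ((j : J) → V j) =>
      ψ w.1 * ψ (e₀.piecewise w.1 w.2)) ≤ 1 + η := by
    have := hN (fun e => if e = e₀ then ∅ else {∅, e \ e₀}) fun e he S hS => by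
      by_cases h : e = e₀
      · simp [h] at hS
      · simp only [h, if_false, Finset.mem_insert, Finset.mem_singleton] at hS
        rcases hS with rfl | rfl
        exacts [Finset.empty_subset _, Finset.sdiff_subset]
    have h3 : ∀ w : ((j : J) → V j) × ((j : J) → V j), (∏ e ∈ H,
        ∏ S ∈ (if e = e₀ then (∅ : Finset (Finset J)) else {∅, e \ e₀}),
          N e (S.piecewise w.2 w.1)) = ψ w.1 * ψ (e₀.piecewise w.1 w.2) := fun w => by
      simp only [hψ]
      rw [← Finset.prod_mul_distrib, ← Finset.filter_ne' H e₀, Finset.prod_filter]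
      refine Finset.prod_congr rfl fun e heH => ?_
      by_cases h : e = e₀
      · simp [h]
      · simp only [h, if_false, ne_eq, not_false_iff, if_true]
        rw [Finset.prod_pair, Finset.piecewise_empty]
        · congr 1
          refine hNd e heH fun i hi => ?_
          by_cases hi' : i ∈ e₀
          · simp [hi']
          · simp [hi', Finset.mem_coe.1 hi]
        · intro h'
          exact hH' e heH h (Finset.sdiff_eq_empty_iff_subset.1 h'.symm)
    simp only [h3] at this
    linarith [(abs_le.1 this).2]
  have h4 : ∀ x, (cexp e₀ ψ x - 1) ^ 2 = cexp e₀ ψ x ^ 2 - 2 * cexp e₀ ψ x + 1 :=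
    fun x => by ring
  simp only [h4]
  rw [avg_add, avg_sub, avg_mul_left, avg_const, h2, h1]
  linarith

/-- If all factors except the one at `e₁` are bounded by `1`, the discrepancy of that factor
controls the count: with the coordinates outside `e₁` frozen, every other factor is a
function of a face of `e₁`. -/
lemma counting_bounded {H : Finset (Finset J)} {f : Finset J → ((j : J) → V j) → ℝ} {ε : ℝ}
    {e₁ : Finset J} (he₁ : e₁ ∈ H) (hne₁ : e₁.Nonempty)
    (hH : ∀ e ∈ H, e ≠ e₁ → ¬ e₁ ⊆ e)
    (hfd : ∀ e ∈ H, DependsOn (f e) (e : Set J))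
    (hf : ∀ e ∈ H, e ≠ e₁ → ∀ x, |f e x| ≤ 1) (hdisc : SmallDisc e₁ (f e₁) ε) :
    |avg fun x => ∏ e ∈ H, f e x| ≤ ε := by
  rw [← avg_resample' e₁]
  refine (abs_avg_le _).trans ((avg_mono (g := fun _ => ε) fun y => ?_).trans
    (le_of_eq (avg_const _)))
  have hex : ∀ e : Finset J, ∃ j, e ∈ H.erase e₁ → j ∈ e₁ ∧ j ∉ e := fun e => by
    by_cases he : e ∈ H.erase e₁
    · obtain ⟨hne, heH⟩ := Finset.mem_erase.1 he
      obtain ⟨j, hj⟩ := Finset.not_subset.1 (hH e heH hne)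
      exact ⟨j, fun _ => hj⟩
    · exact ⟨hne₁.choose, fun h => absurd h he⟩
  choose c hc using hex
  have := hdisc (fun j x => ∏ e ∈ H.erase e₁ with c e = j, f e (e₁.piecewise x y)) ?_ ?_
  · convert this using 4 with x
    rw [Finset.prod_fiberwise_of_maps_to fun e he => (hc e he).1,
      ← Finset.mul_prod_erase H _ he₁]
    congr 1
    exact hfd e₁ he₁ fun i hi => by simp [Finset.mem_coe.1 hi]
  · intro j _ x
    rw [Finset.abs_prod]
    refine Finset.prod_le_one (fun _ _ => abs_nonneg _) fun e he => ?_
    obtain ⟨hne, heH⟩ := Finset.mem_erase.1 (Finset.mem_filter.1 he).1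
    exact hf e heH hne _
  · intro j _ x x' hxx
    refine Finset.prod_congr rfl fun e he => ?_
    obtain ⟨he', hj⟩ := Finset.mem_filter.1 he
    refine hfd e (Finset.mem_of_mem_erase he') fun i hi => ?_
    by_cases hi₁ : i ∈ e₁
    · have : i ≠ j := fun h => (hc e he').2 (hj ▸ h ▸ hi)
      simpa [hi₁] using hxx i (by simp [hi₁, this])
    · simp [hi₁]

/-- Densification of one factor. If the product is `f e₂ * φ`, Cauchy–Schwarz and the strong
linear forms bound the count by the mean square of `cexp e₂ φ`, which up to a small error is
the count with `f e₂` replaced by the truncation of `cexp e₂ φ` to `[-1, 1]`. -/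
lemma densify {H : Finset (Finset J)} {f N : Finset J → ((j : J) → V j) → ℝ} {η : ℝ}
    (hN : LinForms H N η) (hη : η ≤ 1) {e₂ : Finset J} (he₂ : e₂ ∈ H)
    (hH' : ∀ e ∈ H, e ≠ e₂ → ¬ e ⊆ e₂)
    (hNd : ∀ e ∈ H, DependsOn (N e) (e : Set J)) (hfd : ∀ e ∈ H, DependsOn (f e) (e : Set J))
    (hf : ∀ e ∈ H, ∀ x, |f e x| ≤ N e x) :
    ∃ t : ((j : J) → V j) → ℝ, DependsOn t (e₂ : Set J) ∧ (∀ x, |t x| ≤ 1) ∧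
      (avg fun x => ∏ e ∈ H, f e x) ^ 2 ≤
        2 * (|avg fun x => (N e₂ x - 1) * cexp e₂ (fun x => ∏ e ∈ H.erase e₂, f e x) x ^ 2| +
        |avg fun x => ∏ e ∈ H, Function.update f e₂ t e x| + 3 * η + √(3 * η)) := by
  set φ : ((j : J) → V j) → ℝ := fun x => ∏ e ∈ H.erase e₂, f e x with hφ
  set ψ : ((j : J) → V j) → ℝ := fun x => ∏ e ∈ H.erase e₂, N e x with hψ
  have hbd : ∀ x, |cexp e₂ φ x| ≤ cexp e₂ ψ x := fun x => by
    refine (abs_avg_le _).trans (avg_mono fun y => ?_)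
    simp only [hφ, hψ, Finset.abs_prod]
    exact Finset.prod_le_prod (fun _ _ => abs_nonneg _)
      fun e he => hf e (Finset.mem_of_mem_erase he) _
  have htd : DependsOn (fun x => max (-1) (min 1 (cexp e₂ φ x))) (e₂ : Set J) :=
    fun x y h => by simp only [cexp_dependsOn e₂ φ h]
  refine ⟨fun x => max (-1) (min 1 (cexp e₂ φ x)), htd, fun x => ?_, ?_⟩
  · exact abs_le.2 ⟨le_max_left _ _, max_le (by norm_num) (min_le_left _ _)⟩
  set t : ((j : J) → V j) → ℝ := fun x => max (-1) (min 1 (cexp e₂ φ x)) with ht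
  have e1 : (avg fun x => ∏ e ∈ H, f e x) = avg fun x => f e₂ x * cexp e₂ φ x := by
    rw [avg_mul_cexp (hfd e₂ he₂)]
    refine congrArg avg (funext fun x => ?_)
    rw [← Finset.mul_prod_erase H _ he₂]
  have e2 : (avg fun x => ∏ e ∈ H, Function.update f e₂ t e x) =
      avg fun x => t x * cexp e₂ φ x := by
    rw [avg_mul_cexp htd]
    refine congrArg avg (funext fun x => ?_)
    rw [← Finset.mul_prod_erase H _ he₂, Function.update_self]
    congr 1
    exact Finset.prod_congr rfl fun e he => by
      rw [Function.update_of_ne (Finset.ne_of_mem_erase he)]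
  have hclose := hN.cexp_close hH' hNd
  rw [← hψ] at hclose
  have hL1 : (avg fun x => |cexp e₂ ψ x - 1|) ≤ √(3 * η) := by
    refine Real.le_sqrt_of_sq_le (le_trans ?_ hclose)
    have := avg_mul_sq_le (A := fun _ : (j : J) → V j => 1) (M := fun _ => 1)
      (B := fun x => |cexp e₂ ψ x - 1|) (by simp)
    simpa [avg_const] using this
  have hpt : ∀ x, cexp e₂ φ x ^ 2 ≤
      t x * cexp e₂ φ x + (cexp e₂ ψ x - 1) ^ 2 + |cexp e₂ ψ x - 1| := fun x => by
    have hb := hbd x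
    simp only [ht]
    generalize cexp e₂ φ x = a at hb ⊢
    generalize cexp e₂ ψ x = b at hb ⊢
    obtain ⟨h1, h2⟩ := abs_le.1 hb
    rcases le_total a (-1) with ha | ha
    · rw [min_eq_right (by linarith), max_eq_left ha]
      nlinarith [le_abs_self (b - 1)]
    · rcases le_total a 1 with ha' | ha'
      · rw [min_eq_right ha', max_eq_right ha]
        nlinarith [sq_nonneg (b - 1), abs_nonneg (b - 1)]
      · rw [min_eq_left ha', max_eq_right (by norm_num)]
        nlinarith [le_abs_self (b - 1)]
  have hsq : (avg fun x => cexp e₂ φ x ^ 2) ≤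
      |avg fun x => ∏ e ∈ H, Function.update f e₂ t e x| + 3 * η + √(3 * η) := by
    refine (avg_mono hpt).trans ?_
    rw [avg_add, avg_add, ← e2]
    linarith [le_abs_self (avg fun x => ∏ e ∈ H, Function.update f e₂ t e x)]
  have hsplit : (avg fun x => N e₂ x * cexp e₂ φ x ^ 2) =
      (avg fun x => (N e₂ x - 1) * cexp e₂ φ x ^ 2) + avg fun x => cexp e₂ φ x ^ 2 := by
    rw [← avg_add]
    refine congrArg avg (funext fun x => ?_)
    ring
  have hcs := avg_mul_sq_le (A := f e₂) (M := N e₂) (B := cexp e₂ φ) (hf e₂ he₂)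
  have hN0 : ∀ x, 0 ≤ N e₂ x := fun x => (abs_nonneg _).trans (hf e₂ he₂ x)
  rw [e1]
  refine hcs.trans (mul_le_mul ?_ ?_ ?_ (by norm_num))
  · linarith [hN.avg_single he₂]
  · rw [hsplit]
    linarith [le_abs_self (avg fun x => (N e₂ x - 1) * cexp e₂ φ x ^ 2)]
  · exact avg_nonneg fun x => mul_nonneg (hN0 x) (sq_nonneg _)

end Counting

/-- The count of a product is small if one factor has small discrepancy and all factors are
dominated by the majorants `N e`. The proof is by induction on the size `k` of a set `S` of
other edges outside of which the majorants are `1`. -/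
lemma counting_sparse (J : Type) [Fintype J] [DecidableEq J] (k : ℕ) :
    ∀ γ : ℝ, 0 < γ → ∃ δ : ℝ, 0 < δ ∧ ∀ (V : J → Type) [∀ j, Fintype (V j)]
      [∀ j, Nonempty (V j)] (r : ℕ) (H : Finset (Finset J)), 1 ≤ r → (∀ e ∈ H, e.card = r) →
      ∀ (f N : Finset J → ((j : J) → V j) → ℝ) (e₁ : Finset J) (S : Finset (Finset J)),
      e₁ ∈ H → S ⊆ H.erase e₁ → S.card = k → LinForms H N δ →
      (∀ e ∈ H, DependsOn (N e) (e : Set J)) → (∀ e ∈ H, DependsOn (f e) (e : Set J)) →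
      (∀ e ∈ H, ∀ x, |f e x| ≤ N e x) → (∀ e ∈ H.erase e₁, e ∉ S → ∀ x, N e x = 1) →
      SmallDisc e₁ (f e₁) δ → |avg fun x => ∏ e ∈ H, f e x| ≤ γ := by
  have anti : ∀ (r : ℕ) (H : Finset (Finset J)), (∀ e ∈ H, e.card = r) →
      ∀ e ∈ H, ∀ e' ∈ H, e ≠ e' → ¬ e ⊆ e' := fun r H hH e he e' he' hne hsub =>
    hne (Finset.eq_of_subset_of_card_le hsub (by rw [hH e he, hH e' he']))
  induction k with
  | zero =>
    intro γ hγ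
    refine ⟨γ, hγ, ?_⟩
    intro V _ _ r H hr hH f N e₁ S he₁ _ hcard _ _ hfd hf hN1 hdisc
    refine counting_bounded he₁ (Finset.card_pos.1 (by rw [hH e₁ he₁]; exact hr))
      (fun e he hne => anti r H hH e₁ he₁ e he hne.symm) hfd
      (fun e he hne x => ?_) hdisc
    have hS : S = ∅ := Finset.card_eq_zero.1 hcard
    rw [← hN1 e (Finset.mem_erase.2 ⟨hne, he⟩) (by simp [hS]) x]
    exact hf e he x
  | succ k ih =>
    intro γ hγ
    set n := Fintype.card J
    obtain ⟨δ₀, hδ₀, ih⟩ := ih (γ ^ 2 / 8) (by positivity)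
    set a : ℝ := min 1 (γ ^ 2 / 16)
    have ha : 0 < a := lt_min one_pos (by positivity)
    have ha1 : a ≤ 1 := min_le_left _ _
    have ha2 : a ≤ γ ^ 2 / 16 := min_le_right _ _
    -- the five constraints: the induction hypothesis, `η ≤ 1`, the strong linear forms
    -- error, and the two truncation errors
    obtain ⟨δ, hδ, h1, h2, h3, h4, h5⟩ : ∃ δ : ℝ, 0 < δ ∧ δ ≤ δ₀ ∧ δ ≤ 1 ∧
        2 ^ 2 ^ n * δ ≤ a ^ 2 ^ n ∧ 3 * δ ≤ γ ^ 2 / 8 ∧ 3 * δ ≤ (γ ^ 2 / 8) ^ 2 := by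
      refine ⟨min δ₀ (min 1 (min (a ^ 2 ^ n / 2 ^ 2 ^ n) (min (γ ^ 2 / 8 / 3)
        ((γ ^ 2 / 8) ^ 2 / 3)))), by positivity, by simp, by simp, ?_, ?_, ?_⟩
      · rw [mul_comm, ← le_div_iff₀ (by positivity)]; simp
      · rw [mul_comm, ← le_div_iff₀ (by positivity)]; simp
      · rw [mul_comm, ← le_div_iff₀ (by positivity)]; simp
    refine ⟨δ, hδ, ?_⟩
    intro V _ _ r H hr hH f N e₁ S he₁ hS hcard hN hNd hfd hf hN1 hdisc
    obtain ⟨e₂, he₂S⟩ : S.Nonempty := Finset.card_pos.1 (by omega)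
    obtain ⟨hne, he₂⟩ := Finset.mem_erase.1 (hS he₂S)
    have hH1 : ∀ e ∈ H, e ≠ e₂ → ¬ e₂ ⊆ e := fun e he h => anti r H hH e₂ he₂ e he h.symm
    have hH2 : ∀ e ∈ H, e ≠ e₂ → ¬ e ⊆ e₂ := fun e he h => anti r H hH e he e₂ he₂ h
    have hN0 : ∀ e ∈ H, ∀ x, 0 ≤ N e x := fun e he x => (abs_nonneg _).trans (hf e he x)
    obtain ⟨t, htd, ht1, hT⟩ := densify hN h2 he₂ hH2 hNd hfd hf
    have hslf := strong_linear_forms hN h2 he₂ hH1 hH2 hNd hfd hN0 fun e he _ => hf e he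
    have hslf' : |avg fun x => (N e₂ x - 1) *
        cexp e₂ (fun x => ∏ e ∈ H.erase e₂, f e x) x ^ 2| / 2 ≤ a := by
      by_contra! hlt
      have hrn : e₂.card ≤ n := Finset.card_le_univ e₂
      have hpow : 2 ^ e₂.card ≤ 2 ^ n := Nat.pow_le_pow_right (by norm_num) hrn
      have c1 : a ^ 2 ^ n ≤ a ^ 2 ^ e₂.card := pow_le_pow_of_le_one ha.le ha1 hpow
      have c2 := pow_lt_pow_left₀ hlt ha.le (n := 2 ^ e₂.card) (by positivity)
      have c3 : (2 : ℝ) ^ 2 ^ e₂.card * δ ≤ 2 ^ 2 ^ n * δ :=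
        mul_le_mul_of_nonneg_right (pow_le_pow_right₀ (by norm_num) hpow) hδ.le
      linarith
    have hih := ih V r H hr hH (Function.update f e₂ t) (Function.update N e₂ fun _ => 1) e₁
      (S.erase e₂) he₁ ((Finset.erase_subset _ _).trans hS)
      (by rw [Finset.card_erase_of_mem he₂S, hcard]; rfl)
      ((hN.mono h1).update_one e₂)
      (fun e he => by
        by_cases h : e = e₂
        · subst h; rw [Function.update_self]; exact fun _ _ _ => rfl
        · rw [Function.update_of_ne h]; exact hNd e he)
      (fun e he => by
        by_cases h : e = e₂
        · subst h; rw [Function.update_self]; exact htd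
        · rw [Function.update_of_ne h]; exact hfd e he)
      (fun e he x => by
        by_cases h : e = e₂
        · subst h; rw [Function.update_self, Function.update_self]; exact ht1 x
        · rw [Function.update_of_ne h, Function.update_of_ne h]; exact hf e he x)
      (fun e he hes x => by
        by_cases h : e = e₂
        · subst h; rw [Function.update_self]
        · rw [Function.update_of_ne h]
          exact hN1 e he (fun h' => hes (Finset.mem_erase.2 ⟨h, h'⟩)) x)
      (by
        rw [Function.update_of_ne hne.symm]
        exact fun b hb hd => (hdisc b hb hd).trans h1)
    have hsqrt : √(3 * δ) ≤ γ ^ 2 / 8 := Real.sqrt_le_iff.2 ⟨by positivity, h5⟩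
    refine abs_le_of_sq_le_sq (hT.trans ?_) hγ.le
    linarith

/-- The linear forms condition, transferred to functions on the whole of `V_J`. -/
lemma linForms_of_hLinearForms [∀ j, Fintype (V j)] {H : Finset (Finset J)}
    {ν : (e : Finset J) → ((i : ↥e) → V i) → ℝ} {η : ℝ} (h : HLinearForms H ν η) :
    LinForms H (fun e x => ν e (restr e x)) η := by
  intro Ω hΩ
  have key : ∀ w : ((j : J) → V j) × ((j : J) → V j),
      (∏ e ∈ H, ∏ S ∈ Ω e, ν e (restr e (S.piecewise w.2 w.1))) =
      ∏ e ∈ H, ∏ ω : ↥e → Bool,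
        if (decide ((univ.filter fun i : ↥e => ω i = true).map
          (Function.Embedding.subtype _) ∈ Ω e) : Bool)
        then ν e (fun i => if ω i then w.2 i.1 else w.1 i.1) else 1 := by
    intro w
    refine Finset.prod_congr rfl fun e he => ?_
    simp only [decide_eq_true_eq]
    rw [← Finset.prod_filter]
    have hmap : ∀ S ⊆ e, (univ.filter fun i : ↥e => decide (i.1 ∈ S) = true).map
        (Function.Embedding.subtype _) = S := fun S hS => by
      ext i
      simp only [Finset.mem_map, Finset.mem_filter, Finset.mem_univ, true_and,
        decide_eq_true_eq, Function.Embedding.subtype_apply]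
      constructor
      · rintro ⟨a, ha, rfl⟩; exact ha
      · exact fun hi => ⟨⟨i, hS hi⟩, hi, rfl⟩
    refine Finset.prod_bij' (fun S _ => fun i : ↥e => decide (i.1 ∈ S))
      (fun ω _ => (univ.filter fun i : ↥e => ω i = true).map (Function.Embedding.subtype _))
      ?_ ?_ ?_ ?_ ?_
    · intro S hS
      rw [Finset.mem_filter]
      refine ⟨Finset.mem_univ _, ?_⟩
      rw [hmap S (hΩ e he S hS)]
      exact hS
    · intro ω hω
      exact (Finset.mem_filter.1 hω).2
    · intro S hS
      exact hmap S (hΩ e he S hS)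
    · intro ω _
      ext i
      simp
    · intro S hS
      congr 1
      ext i
      simp [restr, Finset.piecewise]
  simp only [key]
  exact h _

/-- **Counting lemma, two sparse hypergraphs.** For every `γ > 0` and finite `J` there
exist `ε > 0` and `η > 0` such that: for every hypergraph system `(J, (V_j), r, H)` and
weighted hypergraphs `ν, g, g'` with `ν` satisfying the `H`-linear forms condition
within `η`, `0 ≤ g ≤ ν`, `0 ≤ g' ≤ ν`, and `(g, g')` an `ε`-discrepancy pair,
`|E[∏_{e ∈ H} g_e(x_e)] - E[∏_{e ∈ H} g'_e(x_e)]| ≤ γ`. -/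
theorem counting_lemma_both_sparse (γ : ℝ) (hγ : 0 < γ)
    (J : Type) [Fintype J] [DecidableEq J] :
    ∃ ε : ℝ, 0 < ε ∧ ∃ η : ℝ, 0 < η ∧
    ∀ (V : J → Type) [∀ j, Fintype (V j)] [∀ j, Nonempty (V j)]
      (r : ℕ), 1 ≤ r → ∀ H : Finset (Finset J), (∀ e ∈ H, e.card = r) →
      ∀ ν g g' : (e : Finset J) → ((i : ↥e) → V i) → ℝ,
      HLinearForms H ν η →
      (∀ e ∈ H, ∀ x, 0 ≤ g e x ∧ g e x ≤ ν e x) →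
      (∀ e ∈ H, ∀ x, 0 ≤ g' e x ∧ g' e x ≤ ν e x) →
      (∀ e ∈ H, EdgeDiscrepancy e (g e) (g' e) ε) →
      |avg (fun x : (j : J) → V j => ∏ e ∈ H, g e (restr e x)) -
        avg (fun x : (j : J) → V j => ∏ e ∈ H, g' e (restr e x))| ≤ γ := by
  set n := Fintype.card J
  set m : ℕ := 2 ^ n
  have hm : (0 : ℝ) < m := by positivity
  choose δ' hδ'0 hδ' using fun k => counting_sparse J k (γ / m) (by positivity)
  obtain ⟨δ, hδ, hle⟩ : ∃ δ : ℝ, 0 < δ ∧ ∀ k ≤ m, δ ≤ δ' k := by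
    refine ⟨(Finset.range (m + 1)).inf' ⟨0, by simp⟩ δ', ?_, fun k hk => ?_⟩
    · exact (Finset.lt_inf'_iff _).2 fun k _ => hδ'0 k
    · exact Finset.inf'_le _ (Finset.mem_range.2 (by omega))
  refine ⟨δ / 2 ^ n, by positivity, δ, hδ, ?_⟩
  intro V _ _ r hr H hH ν g g' hν hg hg' hdisc
  have hHm : H.card ≤ m := by
    simpa [m, n] using Finset.card_le_univ H
  have hrestr : ∀ (e : Finset J) (u : ((i : ↥e) → V i) → ℝ),
      DependsOn (fun x : (j : J) → V j => u (restr e x)) (e : Set J) := fun e u x y h => by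
    have : restr e x = restr e y := funext fun i => h i.1 i.2
    simp only [this]
  -- `mix T` has `g'` on the edges in `T` and `g` elsewhere
  let mix : Finset (Finset J) → Finset J → ((j : J) → V j) → ℝ := fun T e x =>
    if e ∈ T then g' e (restr e x) else g e (restr e x)
  have tele : ∀ T : Finset (Finset J), T ⊆ H →
      |avg (fun x : (j : J) → V j => ∏ e ∈ H, g e (restr e x)) -
        avg (fun x => ∏ e ∈ H, mix T e x)| ≤ T.card * (γ / m) := by
    intro T
    induction T using Finset.induction_on with
    | empty => intro _; simp [mix]
    | insert e₁ T he₁T ih =>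
      intro hT
      obtain ⟨he₁, hT⟩ := Finset.insert_subset_iff.1 hT
      let f : Finset J → ((j : J) → V j) → ℝ := Function.update (mix T) e₁
        fun x => g e₁ (restr e₁ x) - g' e₁ (restr e₁ x)
      have hstep : avg (fun x => ∏ e ∈ H, mix T e x) -
          avg (fun x => ∏ e ∈ H, mix (insert e₁ T) e x) = avg fun x => ∏ e ∈ H, f e x := by
        rw [← avg_sub]
        refine congrArg avg (funext fun x => ?_)
        rw [← Finset.mul_prod_erase H (fun e => mix T e x) he₁,
          ← Finset.mul_prod_erase H (fun e => mix (insert e₁ T) e x) he₁,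
          ← Finset.mul_prod_erase H (fun e => f e x) he₁]
        have h1 : ∏ e ∈ H.erase e₁, mix (insert e₁ T) e x = ∏ e ∈ H.erase e₁, mix T e x :=
          Finset.prod_congr rfl fun e he => by
            simp [mix, Finset.mem_insert, Finset.ne_of_mem_erase he]
        have h2 : ∏ e ∈ H.erase e₁, f e x = ∏ e ∈ H.erase e₁, mix T e x :=
          Finset.prod_congr rfl fun e he => by
            simp only [f, Function.update_of_ne (Finset.ne_of_mem_erase he)]
        rw [h1, h2, ← sub_mul]
        simp [f, mix, he₁T]
      have hsmall : |avg fun x => ∏ e ∈ H, f e x| ≤ γ / m := by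
        have hk : (H.erase e₁).card ≤ m := (Finset.card_erase_le).trans hHm
        refine hδ' (H.erase e₁).card V r H hr hH f (fun e x => ν e (restr e x)) e₁
          (H.erase e₁) he₁ (Finset.Subset.refl _) rfl
          ((linForms_of_hLinearForms hν).mono (hle _ hk)) (fun e _ => hrestr e _) ?_ ?_
          (fun e he he' => absurd he he') ?_
        · intro e he
          by_cases h : e = e₁
          · subst h
            simp only [f, Function.update_self]
            exact hrestr e fun z => g e z - g' e z
          · simp only [f, Function.update_of_ne h]
            by_cases heT : e ∈ T
            · simpa only [mix, heT, if_true] using hrestr e (g' e)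
            · simpa only [mix, heT, if_false] using hrestr e (g e)
        · intro e he x
          have a1 := hg e he (restr e x)
          have a2 := hg' e he (restr e x)
          by_cases h : e = e₁
          · subst h
            simp only [f, Function.update_self]
            exact abs_le.2 ⟨by linarith, by linarith⟩
          · simp only [f, Function.update_of_ne h, mix]
            split_ifs
            · rw [abs_of_nonneg a2.1]; exact a2.2
            · rw [abs_of_nonneg a1.1]; exact a1.2
        · simp only [f, Function.update_self]
          intro b hb hd
          refine (smallDisc_of_edgeDiscrepancy (hdisc e₁ he₁) b hb hd).trans
            (le_trans ?_ (hle _ hk))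
          rw [mul_div_assoc', div_le_iff₀ (by positivity), mul_comm]
          exact mul_le_mul_of_nonneg_left (pow_le_pow_right₀ (by norm_num)
            (Finset.card_le_univ e₁)) hδ.le
      rw [Finset.card_insert_of_notMem he₁T]
      push_cast
      have := abs_sub_le (avg (fun x : (j : J) → V j => ∏ e ∈ H, g e (restr e x)))
        (avg (fun x => ∏ e ∈ H, mix T e x)) (avg (fun x => ∏ e ∈ H, mix (insert e₁ T) e x))
      rw [hstep] at this
      linarith [ih hT]
  have hfin := tele H (Finset.Subset.refl _)
  have hmix : ∀ x : (j : J) → V j, ∏ e ∈ H, mix H e x = ∏ e ∈ H, g' e (restr e x) := fun x =>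
    Finset.prod_congr rfl fun e he => by simp only [mix, he, if_true]
  simp only [hmix] at hfin
  refine hfin.trans ?_
  rw [mul_div_assoc', div_le_iff₀ hm, mul_comm]
  exact mul_le_mul_of_nonneg_left (by exact_mod_cast hHm) hγ.le
end
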